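/- arXiv:0912.0497 — 9 statements merged into one kernel-verified Lean document; each statement's English description precedes it below -/
import Mathlib

section
/- Let τ be an uncountable cardinal and let S be an uncountable subset of an abelian group G. Then S is τ-wide if and only if |nS| ≥ τ for every positive integer n (i.e. min{|nS| : n ∈ ℕ, n ≥ 1} ≥ τ). -/
/-!
If `|nS| < τ` for some `n ≥ 1`, a set `S' ⊆ S` of representatives for the fibres of `s ↦ n • s`
has `|S'| = |nS| < τ` and `nS = nS' ⊆ ⟨S'⟩`, so `S` is not `τ`-wide. Conversely,
`|⟨S'⟩| ≤ max |S'| ℵ₀ < τ` whenever `|S'| < τ`, since `τ` is uncountable, so `⟨S'⟩` cannot contain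
a set `nS` of size at least `τ`.
-/

open Cardinal

universe u

/-- For an infinite cardinal `τ`, a subset `S` of an abelian group `G` is `τ`-wide if
`nS \ ⟨S'⟩ ≠ ∅` for every integer `n ≥ 1` and every `S' ⊆ S` with `|S'| < τ`. -/
def IsWide {G : Type u} [AddCommGroup G] (τ : Cardinal.{u}) (S : Set G) : Prop :=
  ∀ n : ℕ, 1 ≤ n → ∀ S' : Set G, S' ⊆ S → #S' < τ →
    (((fun s => n • s) '' S) \ (AddSubgroup.closure S' : Set G)).Nonempty

/-- The subgroup generated by `s` is a quotient of the free abelian group on `s`. -/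
theorem mk_addSubgroup_closure_le {G : Type u} [AddCommGroup G] (s : Set G) :
    #(AddSubgroup.closure s) ≤ max #s ℵ₀ := by
  rcases s.eq_empty_or_nonempty with rfl | hs
  · rw [AddSubgroup.closure_empty]
    exact (Cardinal.mk_le_aleph0).trans (le_max_right _ _)
  · haveI : Nonempty s := hs.to_subtype
    let f : FreeAbelianGroup s →+ G := FreeAbelianGroup.lift (fun x : s => (x : G))
    have hle : AddSubgroup.closure s ≤ f.range :=
      (AddSubgroup.closure_le _).2 fun x hx =>
        ⟨FreeAbelianGroup.of ⟨x, hx⟩, FreeAbelianGroup.lift_apply_of _ _⟩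
    calc #(AddSubgroup.closure s) ≤ #(Set.range f) := Cardinal.mk_le_mk_of_subset hle
      _ ≤ #(FreeAbelianGroup s) := Cardinal.mk_range_le
      _ = max #s ℵ₀ := Cardinal.mk_freeAbelianGroup _

/-- For an uncountable cardinal `τ` and an uncountable subset `S` of an abelian
group `G`, `S` is `τ`-wide iff `|nS| ≥ τ` for every integer `n ≥ 1`. -/
theorem stmt0 {G : Type u} [AddCommGroup G] (τ : Cardinal.{u}) (hτ : ℵ₀ < τ)
    (S : Set G) (hS : ¬ S.Countable) :
    IsWide τ S ↔ ∀ n : ℕ, 1 ≤ n → τ ≤ #((fun s => n • s) '' S) := by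
  constructor
  · intro h n hn
    by_contra! hlt
    obtain ⟨S', hS', hbij⟩ := Set.exists_subset_bijOn S (fun s => n • s)
    have hcard : #S' = #((fun s => n • s) '' S) := by
      rw [← hbij.image_eq, Cardinal.mk_image_eq_of_injOn _ _ hbij.injOn]
    obtain ⟨x, hx, hx'⟩ := h n hn S' hS' (hcard ▸ hlt)
    obtain ⟨s, hs, rfl⟩ := hbij.surjOn hx
    exact hx' (AddSubgroup.nsmul_mem _ (AddSubgroup.subset_closure hs) n)
  · intro h n hn S' _ hlt
    rw [Set.sdiff_nonempty]
    intro hsub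
    exact absurd ((h n hn).trans ((Cardinal.mk_le_mk_of_subset hsub).trans
      (mk_addSubgroup_closure_le S'))) (not_le.2 (max_lt hlt hτ))
end

section
/- Let G be a torsion abelian group and S ⊆ G. Then: (a) S is ω-wide if and only if nS is infinite for every integer n ≥ 1; and (b) G contains an ω-wide subset if and only if G is unbounded (i.e. there is no integer n ≥ 1 with nG = {0}). -/
/-!
In a torsion abelian group a finitely generated subgroup is finite, so an infinite set `nS` is never
contained in `⟨S'⟩` for a finite `S'`; this shows that `S` is `ω`-wide once every `nS` is infinite.
Conversely, if some `nS` is finite, multiplying `n` by a common multiple of the orders of its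
elements gives `m ≥ 1` with `mS ⊆ {0}` (`exists_nsmul_eq_zero_of_finite`), and the choice `S' = ∅`
shows that `S` is not `ω`-wide (`not_isWide_of_nsmul_eq_zero`). For part (b), the same two facts
show that `G` itself is `ω`-wide when it is unbounded, and that a bounded group has no `ω`-wide
subset.
-/

open Cardinal

universe u

/-- If `nS` is finite for some `n ≥ 1`, then a single `m ≥ 1` annihilates `S`. -/
lemma exists_nsmul_eq_zero_of_finite {G : Type u} [AddCommGroup G] (hG : IsAddTorsion G)
    {S : Set G} {n : ℕ} (hn : 1 ≤ n) (hfin : ((fun s => n • s) '' S).Finite) :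
    ∃ m : ℕ, 1 ≤ m ∧ ∀ s ∈ S, m • s = 0 := by
  refine ⟨(∏ x ∈ hfin.toFinset, addOrderOf x) * n, ?_, fun s hs => ?_⟩
  · exact Nat.mul_pos (Finset.prod_pos fun x _ => (hG x).addOrderOf_pos) hn
  · rw [mul_nsmul']
    apply addOrderOf_dvd_iff_nsmul_eq_zero.mp
    exact Finset.dvd_prod_of_mem _ (hfin.mem_toFinset.mpr ⟨s, hs, rfl⟩)

lemma not_isWide_of_nsmul_eq_zero {G : Type u} [AddCommGroup G] {S : Set G} {m : ℕ} (hm : 1 ≤ m)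
    (h : ∀ s ∈ S, m • s = 0) : ¬ IsWide ℵ₀ S := by
  intro hS
  obtain ⟨_, ⟨s, hs, rfl⟩, hs'⟩ := hS m hm ∅ (Set.empty_subset S)
    (by simpa using Cardinal.aleph0_pos)
  exact hs' (by simp [h s hs])

lemma finite_closure_of_torsion {G : Type u} [AddCommGroup G] (hG : IsAddTorsion G)
    {S' : Set G} (hS' : S'.Finite) : (AddSubgroup.closure S' : Set G).Finite := by
  have := hS'.to_subtype
  have hfg : AddGroup.FG (AddSubgroup.closure S') := AddGroup.closure_finite_fg S'
  have : Finite (AddSubgroup.closure S') :=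
    AddCommGroup.finite_of_fg_isAddTorsion _ (hG.addSubgroup _)
  exact Set.toFinite _

lemma isWide_of_infinite {G : Type u} [AddCommGroup G] (hG : IsAddTorsion G) {S : Set G}
    (h : ∀ n : ℕ, 1 ≤ n → ((fun s => n • s) '' S).Infinite) : IsWide ℵ₀ S := fun n hn _ _ hcard =>
  ((h n hn).sdiff (finite_closure_of_torsion hG
    (Cardinal.lt_aleph0_iff_set_finite.mp hcard))).nonempty

/-- Let `G` be a torsion abelian group and `S ⊆ G`. Then:
(a) `S` is `ω`-wide iff `nS` is infinite for every integer `n ≥ 1`; and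
(b) `G` contains an `ω`-wide subset iff `G` is unbounded. -/
theorem stmt1 {G : Type u} [AddCommGroup G] (hG : AddMonoid.IsTorsion G) (S : Set G) :
    (IsWide ℵ₀ S ↔ ∀ n : ℕ, 1 ≤ n → ((fun s => n • s) '' S).Infinite) ∧
    ((∃ T : Set G, IsWide ℵ₀ T) ↔ ¬ ∃ n : ℕ, 1 ≤ n ∧ ∀ g : G, n • g = 0) := by
  refine ⟨⟨fun hS n hn hfin => ?_, isWide_of_infinite hG⟩, ?_, fun hunb => ⟨Set.univ, ?_⟩⟩
  · obtain ⟨m, hm, hmS⟩ := exists_nsmul_eq_zero_of_finite hG hn hfin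
    exact not_isWide_of_nsmul_eq_zero hm hmS hS
  · rintro ⟨T, hT⟩ ⟨n, hn, hnG⟩
    exact not_isWide_of_nsmul_eq_zero hn (fun s _ => hnG s) hT
  · refine isWide_of_infinite hG fun n hn hfin => hunb ?_
    obtain ⟨m, hm, hmG⟩ := exists_nsmul_eq_zero_of_finite hG hn hfin
    exact ⟨m, hm, fun g => hmG g (Set.mem_univ g)⟩
end

section
/- Let τ be an infinite cardinal and let S be a τ-wide subset of an abelian group G. Then there exist a subgroup H of G and an injective group homomorphism φ : H → 𝕋^(2^τ) such that |H| = τ and φ(H ∩ S) is dense in 𝕋^(2^τ) (with the product topology). -/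
/-!
The subgroup `H` is generated by a sequence `s α ∈ S` (`α < τ`), and `φ` is assembled one coordinate
at a time from characters of `G` prescribed approximately on that sequence.

Since `S` is `τ`-wide, for any bounds `N α` one can choose `s α ∈ S` recursively so that
`k • s α ∉ ⟨s β : β < α⟩` for `1 ≤ k ≤ N α`: apply wideness with the integer `(N α)!`
(`exists_wide_seq`). A character given on `⟨s β : β < α⟩` may be continued to `s α` by any value
in a coset of the `m`-torsion of `𝕋`, where `m > N α` (or `m` is infinite) is the order of `s α`
modulo the previous terms. These values are so dense that any target is met up to `2 / N α`,
with enough freedom left to avoid one given value on a fixed new element `k • s α + g`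
(`exists_step`). Hence for all targets `d α` and every nonzero `h ∈ H` there is a character `χ` with
`‖χ (s α) - d α‖ ≤ 2 / N α` for all `α` and `χ h ≠ 0` (`exists_char_ne_zero`). Limit stages need
no recursion: characters form a closed subset of the compact space `𝕋 ^ G`, so it suffices to
satisfy finitely many constraints at a time (`exists_extend`).

By the Hewitt–Marczewski–Pondiczery argument, `𝕋 ^ (2 ^ τ)` has a dense subset indexed by a set of
size `τ` (`hmpPoint`, `exists_hmpPoint_near`). Indexing the sequence by pairs (dense point, `n`)
with `N α = n + 1`, and using as targets for the `i`-th character the `i`-th coordinates of the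
dense points, makes the image of the sequence dense. Since `τ ≤ 2 ^ τ`, every nonzero
`h ∈ H` can be allotted a coordinate whose character does not vanish at `h`, so `φ` is injective.
-/

open Cardinal

universe u

/-! ### Characters with approximately prescribed values -/

/-- Divisibility of the circle: a value `c` at `s` compatible with the relations of `s` modulo `L`
extends to a character of `G` that vanishes on `L`. -/
lemma exists_char_of_zsmul {G : Type u} [AddCommGroup G] (L : AddSubgroup G) (s : G)
    (c : AddCircle (1 : ℝ)) (hc : ∀ k : ℤ, k • s ∈ L → k • c = 0) :
    ∃ ψ : G →+ AddCircle (1 : ℝ), (∀ g ∈ L, ψ g = 0) ∧ ψ s = c := by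
  let f : ℤ →+ G ⧸ L := zmultiplesHom (G ⧸ L) (s : G ⧸ L)
  have hker : f.ker ≤ (zmultiplesHom (AddCircle (1 : ℝ)) c).ker := by
    intro k hk
    have h1 : ((k • s : G) : G ⧸ L) = 0 := by simpa [f] using hk
    have h2 := hc k ((QuotientAddGroup.eq_zero_iff _).1 h1)
    simpa using h2
  obtain ⟨h, hh⟩ := (Module.Baer.of_divisible (AddCircle (1 : ℝ))).extension_property_addMonoidHom
    (QuotientAddGroup.kerLift f) (QuotientAddGroup.kerLift_injective f)
    (QuotientAddGroup.lift f.ker (zmultiplesHom (AddCircle (1 : ℝ)) c) hker)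
  refine ⟨h.comp (QuotientAddGroup.mk' L), fun g hg => ?_, ?_⟩
  · have : (g : G ⧸ L) = 0 := (QuotientAddGroup.eq_zero_iff _).2 hg
    simp [this]
  · have := DFunLike.congr_fun hh ((1 : ℤ) : ℤ ⧸ f.ker)
    simpa [f] using this

/-- If no multiple `k • s` with `1 ≤ k ≤ N` lies in `L`, a character vanishing on `L` can take at `s` a
value within `2 / N` of any target `t`, and at the same time avoid any value `e` at an element
`k • s` outside `L`. -/
lemma exists_step {G : Type u} [AddCommGroup G] (L : AddSubgroup G) (s : G) (N : ℕ) (hN : 0 < N)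
    (hs : ∀ k : ℕ, 0 < k → k ≤ N → k • s ∉ L) (t e : AddCircle (1 : ℝ)) (k : ℤ)
    (hk : k • s ∉ L) :
    ∃ ψ : G →+ AddCircle (1 : ℝ), (∀ g ∈ L, ψ g = 0) ∧ ‖ψ s - t‖ ≤ 2 / N ∧ k • ψ s ≠ e := by
  -- `M` is the order of `s` modulo `L` if that is finite.
  obtain ⟨M, hNM, hM, hMk⟩ :
      ∃ M : ℕ, N ≤ M ∧ (∀ j : ℤ, j • s ∈ L → (M : ℤ) ∣ j) ∧ ¬ (M : ℤ) ∣ k := by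
    have key : ∀ j : ℤ, j • s ∈ L ↔ (addOrderOf (s : G ⧸ L) : ℤ) ∣ j := by
      intro j
      rw [addOrderOf_dvd_iff_zsmul_eq_zero, ← QuotientAddGroup.eq_zero_iff]
      simp
    rcases Nat.eq_zero_or_pos (addOrderOf (s : G ⧸ L)) with h0 | hpos
    · -- `s` has infinite order modulo `L`: any large modulus serves
      refine ⟨N + k.natAbs + 1, by omega, fun j hj => ?_, fun hd => ?_⟩
      · rw [key, h0] at hj
        simp only [Nat.cast_zero, zero_dvd_iff] at hj
        simp [hj]
      · have hk0 : k ≠ 0 := by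
          rintro rfl
          exact hk (by simp)
        have := Nat.le_of_dvd (Int.natAbs_pos.2 hk0) (Int.natCast_dvd.1 hd)
        omega
    · refine ⟨addOrderOf (s : G ⧸ L), ?_, fun j hj => (key j).1 hj, fun hd => hk ((key k).2 hd)⟩
      by_contra hlt
      refine hs _ hpos (not_le.1 hlt).le ?_
      have := (key (addOrderOf (s : G ⧸ L) : ℤ)).2 dvd_rfl
      simpa using this
  have hM0 : 0 < M := hN.trans_le hNM
  have hMR : (0 : ℝ) < M := by exact_mod_cast hM0
  obtain ⟨r, rfl⟩ := QuotientAddGroup.mk_surjective t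
  -- `c 0` is the point of `(1/M)ℤ` nearest to the target and `c 1` the next one; as `M ∤ k`, the
  -- multiples `k • c 0` and `k • c 1` differ, so one of them is not `e`.
  let c : ℤ → AddCircle (1 : ℝ) := fun i => (((round (r * M) + i : ℤ) / M : ℝ) : AddCircle (1 : ℝ))
  have hc : ∀ i, ∀ j : ℤ, j • s ∈ L → j • c i = 0 := by
    intro i j hj
    obtain ⟨q, rfl⟩ := hM j hj
    rw [← AddCircle.coe_zsmul, AddCircle.coe_eq_zero_iff]
    refine ⟨q * (round (r * M) + i), ?_⟩
    simp only [zsmul_eq_mul]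
    push_cast
    field_simp
  have hnorm : ∀ i : ℤ, 0 ≤ i → i ≤ 1 → ‖c i - (r : AddCircle (1 : ℝ))‖ ≤ 2 / N := by
    intro i hi0 hi1
    rw [← AddCircle.coe_sub]
    refine QuotientAddGroup.norm_mk_le_norm.trans ?_
    have h1 : ((round (r * M) + i : ℤ) / M : ℝ) - r = ((i : ℝ) - (r * M - round (r * M))) / M := by
      push_cast
      field_simp
      ring
    have h2 := abs_sub_round (r * M)
    have hi0' : (0 : ℝ) ≤ i := by exact_mod_cast hi0
    have hi1' : (i : ℝ) ≤ 1 := by exact_mod_cast hi1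
    have hNR : (0 : ℝ) < N := by exact_mod_cast hN
    rw [h1, Real.norm_eq_abs, abs_div, abs_of_pos hMR]
    rw [abs_le] at h2
    have : |(i : ℝ) - (r * M - round (r * M))| ≤ 2 := by
      rw [abs_le]
      constructor <;> linarith
    gcongr
  have hne : k • c 1 ≠ k • c 0 := by
    intro h
    have h1 : k • (c 1 - c 0) = 0 := by rw [smul_sub, h, sub_self]
    rw [← AddCircle.coe_sub, ← AddCircle.coe_zsmul, AddCircle.coe_eq_zero_iff] at h1
    obtain ⟨n, hn⟩ := h1
    apply hMk
    refine ⟨n, ?_⟩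
    have : (k : ℝ) = M * n := by
      simp only [zsmul_eq_mul] at hn
      push_cast at hn
      field_simp at hn
      linarith
    exact_mod_cast this
  by_cases he : k • c 0 = e
  · obtain ⟨ψ, h1, h2⟩ := exists_char_of_zsmul L s (c 1) (hc 1)
    exact ⟨ψ, h1, by rw [h2]; exact hnorm 1 zero_le_one le_rfl, by rw [h2, ← he]; exact hne⟩
  · obtain ⟨ψ, h1, h2⟩ := exists_char_of_zsmul L s (c 0) (hc 0)
    exact ⟨ψ, h1, by rw [h2]; exact hnorm 0 le_rfl zero_le_one, by rwa [h2]⟩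

/-- A character satisfying the constraints `‖χ (s α) - d α‖ ≤ 2 / N α` for `α` in an initial segment `J`
can be changed outside `⟨s '' J⟩` so as to satisfy all of them. Finitely many constraints are met by
correcting the character in increasing order of the indices; compactness does the rest. -/
lemma exists_extend {G : Type u} [AddCommGroup G] {ι : Type*} [LinearOrder ι] (s : ι → G)
    (N : ι → ℕ) (hN : ∀ α, 0 < N α)
    (hs : ∀ α, ∀ k : ℕ, 0 < k → k ≤ N α → k • s α ∉ AddSubgroup.closure (s '' Set.Iio α))
    (d : ι → AddCircle (1 : ℝ)) (J : Set ι) (hJ : IsLowerSet J) (f : G →+ AddCircle (1 : ℝ))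
    (hf : ∀ α ∈ J, ‖f (s α) - d α‖ ≤ 2 / N α) :
    ∃ χ : G →+ AddCircle (1 : ℝ), (∀ g ∈ AddSubgroup.closure (s '' J), χ g = f g) ∧
      ∀ α, ‖χ (s α) - d α‖ ≤ 2 / N α := by
  classical
  have fin : ∀ F : Finset ι, ∃ χ : G →+ AddCircle (1 : ℝ),
      (∀ g ∈ AddSubgroup.closure (s '' J), χ g = f g) ∧
      ∀ α ∈ F, ‖χ (s α) - d α‖ ≤ 2 / N α := by
    intro F
    induction F using Finset.induction_on_max with
    | empty => exact ⟨f, fun _ _ => rfl, by simp⟩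
    | insert α F hmax ih =>
      obtain ⟨χ, h1, h2⟩ := ih
      by_cases hα : α ∈ J
      · refine ⟨χ, h1, fun β hβ => ?_⟩
        rcases Finset.mem_insert.1 hβ with rfl | hβ
        · rw [h1 _ (AddSubgroup.subset_closure ⟨β, hα, rfl⟩)]
          exact hf β hα
        · exact h2 β hβ
      · have hJα : J ⊆ Set.Iio α := fun β hβ => by
          by_contra hlt
          exact hα (hJ (not_lt.1 hlt) hβ)
        obtain ⟨ψ, hψ0, hψ, -⟩ := exists_step (AddSubgroup.closure (s '' Set.Iio α)) (s α) (N α)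
          (hN α) (hs α) (d α - χ (s α)) 0 1
          (by simpa using hs α 1 one_pos (hN α))
        refine ⟨χ + ψ, fun g hg => ?_, fun β hβ => ?_⟩
        · rw [AddMonoidHom.add_apply, h1 g hg,
            hψ0 g (AddSubgroup.closure_mono (Set.image_mono hJα) hg), add_zero]
        · rcases Finset.mem_insert.1 hβ with rfl | hβ
          · rw [AddMonoidHom.add_apply]
            convert hψ using 2
            abel
          · rw [AddMonoidHom.add_apply, hψ0 _ (AddSubgroup.subset_closure ⟨β, hmax β hβ, rfl⟩),
              add_zero]
            exact h2 β hβ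
  -- The characters that agree with `f` on `⟨s '' J⟩`, as a closed subset of the compact `𝕋 ^ G`.
  let K : Set (G → AddCircle (1 : ℝ)) :=
    Set.range ((↑) : (G →+ AddCircle (1 : ℝ)) → G → AddCircle (1 : ℝ)) ∩
      {χ | ∀ g ∈ AddSubgroup.closure (s '' J), χ g = f g}
  have hK : IsClosed K := by
    refine (AddMonoidHom.isClosed_range_coe _ _).inter ?_
    simp only [Set.ofPred_forall]
    exact isClosed_iInter fun g => isClosed_iInter fun _ =>
      isClosed_eq (continuous_apply g) continuous_const
  have : Fact ((0 : ℝ) < 1) := ⟨one_pos⟩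
  have hne := hK.isCompact.inter_iInter_nonempty
    (fun α : ι => {χ : G → AddCircle (1 : ℝ) | ‖χ (s α) - d α‖ ≤ 2 / N α})
    (fun α => isClosed_le ((continuous_apply (s α)).sub continuous_const).norm continuous_const)
    (fun F => by
      obtain ⟨χ, h1, h2⟩ := fin F
      exact ⟨χ, ⟨⟨χ, rfl⟩, h1⟩, by simpa using h2⟩)
  obtain ⟨-, ⟨⟨χ, rfl⟩, h1⟩, h2⟩ := hne
  exact ⟨χ, h1, by simpa using h2⟩

/-- Besides satisfying all the constraints, the character can be made nonzero at a given nonzero `h`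
of `⟨s⟩`: at the least `α` with `h ∈ ⟨s β : β ≤ α⟩`, the value at `s α` is chosen to avoid
`χ h = 0`, and the later values do not affect `χ h`. -/
lemma exists_char_ne_zero {G : Type u} [AddCommGroup G] {ι : Type*} [LinearOrder ι]
    [WellFoundedLT ι] (s : ι → G)
    (N : ι → ℕ) (hN : ∀ α, 0 < N α)
    (hs : ∀ α, ∀ k : ℕ, 0 < k → k ≤ N α → k • s α ∉ AddSubgroup.closure (s '' Set.Iio α))
    (d : ι → AddCircle (1 : ℝ)) (h : G) (hh : h ∈ AddSubgroup.closure (Set.range s)) :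
    ∃ χ : G →+ AddCircle (1 : ℝ), (h ≠ 0 → χ h ≠ 0) ∧ ∀ α, ‖χ (s α) - d α‖ ≤ 2 / N α := by
  obtain ⟨f, -, hf⟩ := exists_extend s N hN hs d ∅ isLowerSet_empty 0 (by simp)
  by_cases h0 : h = 0
  · exact ⟨f, fun hne => absurd h0 hne, hf⟩
  -- An element of the subgroup generated by a set of terms lies in the subgroup generated by
  -- the terms up to some index of that set, unless it vanishes.
  have bdd : ∀ A : Set ι, h ∈ AddSubgroup.closure (s '' A) →
      ∃ β ∈ A, h ∈ AddSubgroup.closure (s '' Set.Iic β) := by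
    intro A hA
    have : h = 0 ∨ ∃ β ∈ A, h ∈ AddSubgroup.closure (s '' Set.Iic β) := by
      clear h0 hh
      induction hA using AddSubgroup.closure_induction with
      | mem x hx =>
        obtain ⟨β, hβ, rfl⟩ := hx
        exact Or.inr ⟨β, hβ, AddSubgroup.subset_closure ⟨β, le_rfl, rfl⟩⟩
      | zero => exact Or.inl rfl
      | add x y _ _ hx hy =>
        rcases hx with rfl | ⟨β, hβ, hx⟩
        · simpa using hy
        rcases hy with rfl | ⟨γ, hγ, hy⟩
        · exact Or.inr ⟨β, hβ, by simpa using hx⟩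
        rcases le_total β γ with hle | hle
        · exact Or.inr ⟨γ, hγ, add_mem (AddSubgroup.closure_mono
            (Set.image_mono (Set.Iic_subset_Iic.2 hle)) hx) hy⟩
        · exact Or.inr ⟨β, hβ, add_mem hx (AddSubgroup.closure_mono
            (Set.image_mono (Set.Iic_subset_Iic.2 hle)) hy)⟩
      | neg x _ hx =>
        rcases hx with rfl | ⟨β, hβ, hx⟩
        · simp
        · exact Or.inr ⟨β, hβ, neg_mem hx⟩
    exact this.resolve_left h0
  obtain ⟨β₀, -, hβ₀⟩ := bdd Set.univ (by simpa using hh)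
  obtain ⟨α, hα, hmin⟩ := WellFounded.has_min (wellFounded_lt (α := ι))
    {β | h ∈ AddSubgroup.closure (s '' Set.Iic β)} ⟨β₀, hβ₀⟩
  have hL : h ∉ AddSubgroup.closure (s '' Set.Iio α) := by
    intro hmem
    obtain ⟨β, hβ, hβ'⟩ := bdd _ hmem
    exact hmin β hβ' hβ
  have hdec : ∃ k : ℤ, ∃ g ∈ AddSubgroup.closure (s '' Set.Iio α), h = k • s α + g := by
    have hα' : h ∈ AddSubgroup.closure (s '' Set.Iic α) := hα
    rw [← Set.Iio_insert, Set.image_insert_eq, Set.insert_eq, AddSubgroup.closure_union,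
      AddSubgroup.mem_sup] at hα'
    obtain ⟨y, hy, g, hg, rfl⟩ := hα'
    obtain ⟨k, rfl⟩ := AddSubgroup.mem_closure_singleton.1 hy
    exact ⟨k, g, hg, rfl⟩
  obtain ⟨k, g, hg, rfl⟩ := hdec
  have hk : k • s α ∉ AddSubgroup.closure (s '' Set.Iio α) := fun hk => hL (add_mem hk hg)
  obtain ⟨ψ, hψ0, hψ, hψk⟩ := exists_step _ (s α) (N α) (hN α) (hs α) (d α - f (s α))
    (-f (k • s α + g)) k hk
  obtain ⟨χ, hχ1, hχ2⟩ := exists_extend s N hN hs d (Set.Iic α) (isLowerSet_Iic α) (f + ψ)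
    (by
      intro β hβ
      rw [AddMonoidHom.add_apply]
      rcases eq_or_lt_of_le (show β ≤ α from hβ) with rfl | hlt
      · convert hψ using 2
        abel
      · rw [hψ0 _ (AddSubgroup.subset_closure ⟨β, hlt, rfl⟩), add_zero]
        exact hf β)
  refine ⟨χ, fun _ hzero => hψk ?_, hχ2⟩
  rw [hχ1 _ hα, AddMonoidHom.add_apply, map_add ψ, hψ0 g hg, add_zero, map_zsmul ψ] at hzero
  exact eq_neg_of_add_eq_zero_right hzero

/-! ### A small dense set of points in a large power of the circle -/

open Classical in
/-- The points of the dense set in the Hewitt–Marczewski–Pondiczery theorem, for a power of the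
circle whose coordinates `i` are labelled by subsets `e i` of `X`. A point is given by a finite
`F ⊆ X` and a finitely supported rational function on `Finset X`; its `i`-th coordinate is the value
of that function at `F ∩ e i`. -/
noncomputable def hmpPoint {X I : Type*} (e : I → Set X) (p : Finset X × (Finset X →₀ ℚ))
    (i : I) : AddCircle (1 : ℝ) :=
  ((p.2 (p.1.filter (· ∈ e i)) : ℝ) : AddCircle (1 : ℝ))

/-- Density of the points `hmpPoint e p`: for a suitable finite `F`, the traces `F ∩ e i` of finitely
many distinct subsets are distinct, so the coordinates can be prescribed independently. -/
lemma exists_hmpPoint_near {X I : Type*} (e : I → Set X) (he : Function.Injective e)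
    (T : Finset I) (x : I → AddCircle (1 : ℝ)) (ε : ℝ) (hε : 0 < ε) :
    ∃ p, ∀ i ∈ T, ‖hmpPoint e p i - x i‖ < ε := by
  classical
  have hq : ∀ i, ∃ q : ℚ, ‖((q : ℝ) : AddCircle (1 : ℝ)) - x i‖ < ε := by
    intro i
    obtain ⟨r, hr⟩ := QuotientAddGroup.mk_surjective (x i)
    obtain ⟨q, hq⟩ := (Rat.denseRange_cast (𝕜 := ℝ)).exists_dist_lt r hε
    refine ⟨q, ?_⟩
    rw [← hr]
    change ‖((q : ℝ) : AddCircle (1 : ℝ)) - (r : AddCircle (1 : ℝ))‖ < ε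
    rw [← AddCircle.coe_sub]
    refine QuotientAddGroup.norm_mk_le_norm.trans_lt ?_
    rwa [dist_comm, dist_eq_norm] at hq
  choose q hq using hq
  have hsep : ∀ ij : I × I, ∃ F : Finset X, ij.1 ≠ ij.2 → ∃ a ∈ F, ¬ (a ∈ e ij.1 ↔ a ∈ e ij.2) := by
    rintro ⟨i, j⟩
    by_cases hij : i = j
    · exact ⟨∅, fun h => absurd hij h⟩
    · have : ¬ ∀ a, a ∈ e i ↔ a ∈ e j := fun h => hij (he (Set.ext h))
      push Not at this
      obtain ⟨a, ha⟩ := this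
      exact ⟨{a}, fun _ => ⟨a, by simp, by tauto⟩⟩
  choose F hF using hsep
  let F₀ : Finset X := (T ×ˢ T).biUnion F
  have hinj : ∀ i ∈ T, ∀ j ∈ T, F₀.filter (· ∈ e i) = F₀.filter (· ∈ e j) → i = j := by
    intro i hi j hj hij
    by_contra hne
    obtain ⟨a, ha, hne'⟩ := hF (i, j) hne
    have ha₀ : a ∈ F₀ := Finset.mem_biUnion.2 ⟨(i, j), Finset.mk_mem_product hi hj, ha⟩
    have := Finset.ext_iff.1 hij a
    simp only [Finset.mem_filter, ha₀, true_and] at this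
    exact hne' this
  refine ⟨(F₀, ∑ i ∈ T, Finsupp.single (F₀.filter (· ∈ e i)) (q i)), fun i hi => ?_⟩
  have hval : (∑ j ∈ T, Finsupp.single (F₀.filter (· ∈ e j)) (q j)) (F₀.filter (· ∈ e i)) = q i := by
    rw [Finsupp.finsetSum_apply, Finset.sum_eq_single i]
    · simp
    · intro j hj hji
      exact Finsupp.single_eq_of_ne fun h => hji (hinj i hi j hj h).symm
    · exact fun h => absurd hi h
  have : hmpPoint e (F₀, ∑ i ∈ T, Finsupp.single (F₀.filter (· ∈ e i)) (q i)) i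
      = ((q i : ℝ) : AddCircle (1 : ℝ)) := by
    rw [← hval]
    rfl
  rw [this]
  exact hq i

/-! ### The generating sequence -/

/-- Recursive choice in a wide set; wideness is applied with `(N α)!`, a multiple of every
`k ≤ N α`. -/
lemma exists_wide_seq {G : Type u} [AddCommGroup G] (τ : Cardinal.{u}) (S : Set G)
    (hS : IsWide τ S) {ι : Type u} [LinearOrder ι] [WellFoundedLT ι]
    (hι : ∀ α : ι, #(Set.Iio α) < τ) (N : ι → ℕ) :
    ∃ s : ι → G, (∀ α, s α ∈ S) ∧
      ∀ α, ∀ k : ℕ, 0 < k → k ≤ N α → k • s α ∉ AddSubgroup.closure (s '' Set.Iio α) := by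
  have ex : ∀ (A : Set G) (n : ℕ), ∃ x : G, (A ⊆ S → #A < τ →
      x ∈ S ∧ ∀ k : ℕ, 0 < k → k ≤ n → k • x ∉ AddSubgroup.closure A) := by
    intro A n
    by_cases hA : A ⊆ S ∧ #A < τ
    · obtain ⟨-, ⟨x, hx, rfl⟩, hx'⟩ := hS n.factorial (Nat.factorial_pos n) A hA.1 hA.2
      refine ⟨x, fun _ _ => ⟨hx, fun k hk hkn hmem => hx' ?_⟩⟩
      obtain ⟨m, hm⟩ := Nat.dvd_factorial hk hkn
      change n.factorial • x ∈ AddSubgroup.closure A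
      rw [hm, mul_comm, mul_smul]
      exact AddSubgroup.nsmul_mem _ hmem m
    · exact ⟨0, fun h1 h2 => absurd ⟨h1, h2⟩ hA⟩
  choose pick hpick using ex
  let s : ι → G := IsWellFounded.fix (· < ·)
    fun α (rec : (β : ι) → β < α → G) => pick (Set.range fun β : Set.Iio α => rec β.1 β.2) (N α)
  have hs : ∀ α, s α = pick (s '' Set.Iio α) (N α) := by
    intro α
    rw [Set.image_eq_range]
    exact IsWellFounded.fix_eq _ _ α
  have hcard : ∀ α, #(s '' Set.Iio α) < τ := fun α => mk_image_le.trans_lt (hι α)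
  have hmem : ∀ α, s α ∈ S := by
    intro α
    induction α using WellFoundedLT.induction with
    | ind α ih =>
      rw [hs]
      exact (hpick _ _ (Set.image_subset_iff.2 fun β hβ => ih β hβ) (hcard α)).1
  refine ⟨s, hmem, fun α => ?_⟩
  have := (hpick (s '' Set.Iio α) (N α) (Set.image_subset_iff.2 fun β _ => hmem β) (hcard α)).2
  rwa [← hs] at this

lemma mk_closure_range {G : Type u} [AddCommGroup G] {ι : Type u} [Infinite ι] (s : ι → G)
    (hs : Function.Injective s) : #(AddSubgroup.closure (Set.range s)) = #ι := by
  apply le_antisymm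
  · have h1 : ((AddSubgroup.closure (Set.range s) : AddSubgroup G) : Set G) =
        Set.range (Finsupp.linearCombination ℤ s) := by
      rw [← Submodule.span_int_eq_addSubgroupClosure, ← Finsupp.range_linearCombination]
      rfl
    calc #(AddSubgroup.closure (Set.range s))
        = #(Set.range (Finsupp.linearCombination ℤ s)) := by rw [← h1]; rfl
      _ ≤ #(ι →₀ ℤ) := mk_range_le
      _ = #ι := by simp
  · exact mk_le_of_injective
      (f := fun i => (⟨s i, AddSubgroup.subset_closure ⟨i, rfl⟩⟩ : AddSubgroup.closure (Set.range s)))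
      fun i j h => hs (congrArg Subtype.val h)

/-! ### Assembling the embedding -/

/-- Let `τ` be an infinite cardinal and `S` a `τ`-wide subset of an abelian
group `G`. Then there are a subgroup `H` of `G` and an injective homomorphism
`φ : H → 𝕋^(2^τ)` with `|H| = τ` such that `φ(H ∩ S)` is dense in `𝕋^(2^τ)`. -/
theorem stmt3 {G : Type u} [AddCommGroup G] (τ : Cardinal.{u}) (hτ : ℵ₀ ≤ τ)
    (S : Set G) (hS : IsWide τ S) :
    ∃ (H : AddSubgroup G) (φ : H →+ (((2 : Cardinal.{u}) ^ τ).out → AddCircle (1 : ℝ))),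
      Function.Injective φ ∧ #(↥H) = τ ∧
      Dense (⇑φ '' {x : H | (x : G) ∈ S}) := by
  classical
  have hX : Infinite τ.out := by rwa [infinite_iff, mk_out]
  have hι : Infinite τ.ord.ToType := by rwa [infinite_iff, mk_ord_toType]
  obtain ⟨e⟩ : Nonempty (((2 : Cardinal.{u}) ^ τ).out ≃ Set τ.out) :=
    Cardinal.eq.1 (by rw [mk_set, mk_out, mk_out])
  obtain ⟨b⟩ : Nonempty (τ.ord.ToType ≃ (Finset τ.out × (Finset τ.out →₀ ℚ)) × ℕ) := by
    apply Cardinal.eq.1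
    simp [hτ, mul_eq_self hτ, mul_aleph0_eq hτ]
  let N : τ.ord.ToType → ℕ := fun α => (b α).2 + 1
  have hN : ∀ α, 0 < N α := fun α => Nat.succ_pos _
  obtain ⟨s, hsS, hs⟩ := exists_wide_seq τ S hS
    (fun α : τ.ord.ToType => by simpa using mk_Iio_lt α) N
  have hsne : ∀ α β, α < β → s α ≠ s β := fun α β hlt heq =>
    hs β 1 one_pos (hN β) (by
      rw [one_smul, ← heq]
      exact AddSubgroup.subset_closure ⟨α, hlt, rfl⟩)
  have hsinj : Function.Injective s := by
    intro α β heq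
    rcases lt_trichotomy α β with h | h | h
    · exact absurd heq (hsne _ _ h)
    · exact h
    · exact absurd heq.symm (hsne _ _ h)
  let H := AddSubgroup.closure (Set.range s)
  have hH : #H = τ := by rw [mk_closure_range s hsinj, mk_ord_toType]
  -- `c` allots to each element of `H` its own coordinate, where the character separates it from `0`.
  obtain ⟨c⟩ : Nonempty (H ↪ ((2 : Cardinal.{u}) ^ τ).out) := by
    rw [← Cardinal.le_def, hH, mk_out]
    exact (cantor τ).le
  have hχ := fun i : ((2 : Cardinal.{u}) ^ τ).out =>
    exists_char_ne_zero s N hN hs (fun α => hmpPoint e (b α).1 i)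
      (Function.invFun c i : H) (Function.invFun c i).2
  choose χ hχ0 hχ using hχ
  refine ⟨H, (AddMonoidHom.mk' (fun (g : G) i => χ i g) fun x y => by
    ext i; simp).comp H.subtype, ?_, hH, ?_⟩
  · rw [injective_iff_map_eq_zero]
    intro h hh
    by_contra hne
    have h1 := hχ0 (c h)
    rw [Function.leftInverse_invFun c.injective h] at h1
    exact h1 (fun h' => hne (Subtype.ext h')) (congrFun hh (c h))
  · intro x
    rw [mem_closure_iff]
    intro U hU hxU
    obtain ⟨T, u, hu, hTU⟩ := isOpen_pi_iff.1 hU x hxU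
    have hball : ∀ i ∈ T, ∀ᶠ n : ℕ in Filter.atTop, Metric.ball (x i) (3 / ((n : ℝ) + 1)) ⊆ u i := by
      intro i hi
      obtain ⟨ε, hε, hεu⟩ := Metric.isOpen_iff.1 (hu i hi).1 (x i) (hu i hi).2
      have hlim : Filter.Tendsto (fun n : ℕ => 3 / ((n : ℝ) + 1)) Filter.atTop (nhds 0) := by
        simpa [div_eq_mul_inv] using tendsto_one_div_add_atTop_nhds_zero_nat.const_mul (3 : ℝ)
      filter_upwards [hlim.eventually (gt_mem_nhds hε)] with n hn
      exact (Metric.ball_subset_ball hn.le).trans hεu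
    obtain ⟨n, hn⟩ := ((Filter.eventually_all_finset T).2 hball).exists
    obtain ⟨p, hp⟩ := exists_hmpPoint_near e e.injective T x (1 / ((n : ℝ) + 1)) (by positivity)
    have hmem : s (b.symm (p, n)) ∈ H := AddSubgroup.subset_closure ⟨_, rfl⟩
    refine ⟨_, hTU ?_, ⟨⟨s (b.symm (p, n)), hmem⟩, hsS _, rfl⟩⟩
    intro i hi
    apply hn i hi
    have h1 := hχ i (b.symm (p, n))
    simp only [N, Equiv.apply_symm_apply] at h1
    push_cast at h1
    have h2 := hp i hi
    rw [Metric.mem_ball, dist_eq_norm]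
    calc ‖χ i (s (b.symm (p, n))) - x i‖
        ≤ ‖χ i (s (b.symm (p, n))) - hmpPoint e p i‖ + ‖hmpPoint e p i - x i‖ :=
          norm_sub_le_norm_sub_add_norm_sub _ _ _
      _ < 2 / ((n : ℝ) + 1) + 1 / ((n : ℝ) + 1) := add_lt_add_of_le_of_lt h1 h2
      _ = 3 / ((n : ℝ) + 1) := by ring
end

section
/- Let τ be an infinite cardinal and let S be a τ-wide subset of an abelian group G. Then there exists a group homomorphism π : G → 𝕋^(2^τ) such that π(S) is dense in 𝕋^(2^τ). -/
/-!
The targets are handled one character at a time. A Hewitt–Marczewski–Pondiczery argument provides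
`τ` many target functions `d : Set W → 𝕋`, where `#W = τ`, each tagged with a precision `1 / (N + 1)`:
a tag is a finite set `F ⊆ W`, a finitely supported `φ` and `N`, and `d X = φ (X ∩ F) / (N + 1)`.
Enumerate the tags along the initial ordinal of `τ`. Wideness yields, by transfinite recursion,
elements `s i ∈ S` with `(N_i + 1)! • s i` outside the subgroup generated by the earlier `s j`
(`exists_sequence`). Thus `s i` has infinite order, or order at least `N_i + 1`, modulo that
subgroup, and any character can be altered at `s i`, without changing it at earlier `s j`, so as to
come within `1 / (N_i + 1)` of a prescribed value (`exists_modify`). Finitely many such requirements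
are met by induction on the largest index, and all of them simultaneously by compactness of the
group of characters (`exists_character`). Using one such character in every coordinate gives `π`,
and `exists_tag` shows that the images of the `s i` are dense.
-/

open Cardinal

universe u

/-- The multiples of `1 / k` are `1 / k`-dense in the circle. -/
lemma exists_int_near (k : ℕ) (hk : 0 < k) (t : AddCircle (1 : ℝ)) :
    ∃ z : ℤ, dist ((z / k : ℝ) : AddCircle (1 : ℝ)) t ≤ 1 / (k : ℝ) := by
  obtain ⟨r, rfl⟩ := QuotientAddGroup.mk_surjective t
  have hk0 : (0 : ℝ) < k := by exact_mod_cast hk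
  refine ⟨round (k * r), ?_⟩
  have h1 : dist ((round (k * r) / k : ℝ) : AddCircle (1 : ℝ)) (r : AddCircle (1 : ℝ))
      ≤ |(round (k * r) / k : ℝ) - r| := by
    rw [dist_eq_norm, ← AddCircle.coe_sub]
    exact QuotientAddGroup.norm_mk_le_norm
  refine h1.trans ?_
  have h2 : (round (k * r) / k : ℝ) - r = -((k * r - round (k * r)) / k) := by
    field_simp
    ring
  rw [h2, abs_neg, abs_div, abs_of_pos hk0]
  have h3 := abs_sub_round ((k : ℝ) * r)
  gcongr
  linarith

/-- In the case `k = 0` the condition `k • x = 0` is void. -/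
lemma exists_torsion_near (k N : ℕ) (hk : k = 0 ∨ N + 1 ≤ k) (t : AddCircle (1 : ℝ)) :
    ∃ x : AddCircle (1 : ℝ), k • x = 0 ∧ dist x t ≤ 1 / ((N : ℝ) + 1) := by
  rcases hk with rfl | hk
  · exact ⟨t, by simp, by rw [dist_self]; positivity⟩
  · have hk0 : 0 < k := by omega
    have hk1 : (k : ℝ) ≠ 0 := by exact_mod_cast hk0.ne'
    have hkN : (N : ℝ) + 1 ≤ k := by exact_mod_cast hk
    obtain ⟨z, hz⟩ := exists_int_near k hk0 t
    refine ⟨_, ?_, hz.trans (by gcongr)⟩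
    rw [← AddCircle.coe_nsmul, nsmul_eq_mul, mul_div_cancel₀ _ hk1]
    exact (AddCircle.coe_eq_zero_iff 1).2 ⟨z, by simp⟩

/-- A character of `Q` can be given an almost arbitrary value at an element of large order. -/
lemma exists_character_near {Q : Type*} [AddCommGroup Q] (q : Q) (N : ℕ)
    (hq : (N + 1).factorial • q ≠ 0) (t : AddCircle (1 : ℝ)) :
    ∃ g : Q →+ AddCircle (1 : ℝ), dist (g q) t ≤ 1 / ((N : ℝ) + 1) := by
  have hk : addOrderOf q = 0 ∨ N + 1 ≤ addOrderOf q := by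
    by_contra! h
    exact hq (addOrderOf_dvd_iff_nsmul_eq_zero.1
      (Nat.dvd_factorial (Nat.pos_of_ne_zero h.1) h.2.le))
  obtain ⟨x, hx, hxt⟩ := exists_torsion_near _ N hk t
  let i : ZMod (addOrderOf q) →+ Q :=
    ZMod.lift _ ⟨zmultiplesHom Q q, by simp [addOrderOf_nsmul_eq_zero]⟩
  let e : ZMod (addOrderOf q) →+ AddCircle (1 : ℝ) :=
    ZMod.lift _ ⟨zmultiplesHom _ x, by simpa using hx⟩
  have hi : Function.Injective i := by
    refine (ZMod.lift_injective _).2 fun m hm => ?_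
    rw [ZMod.intCast_zmod_eq_zero_iff_dvd]
    exact addOrderOf_dvd_iff_zsmul_eq_zero.2 (by simpa using hm)
  obtain ⟨g, hg⟩ := (Module.Baer.of_divisible _).extension_property_addMonoidHom i hi e
  refine ⟨g, ?_⟩
  have h1 : i ((1 : ℤ) : ZMod _) = q := by rw [ZMod.lift_coe]; simp
  have h2 : e ((1 : ℤ) : ZMod _) = x := by rw [ZMod.lift_coe]; simp
  have h3 := DFunLike.congr_fun hg ((1 : ℤ) : ZMod _)
  rw [AddMonoidHom.comp_apply, h1, h2] at h3
  rwa [h3]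

/-- A character can be altered off a subgroup `H` so that its value at an element of large order
modulo `H` becomes almost arbitrary. -/
lemma exists_modify {G : Type*} [AddCommGroup G] (H : AddSubgroup G) (s : G) (N : ℕ)
    (hs : (N + 1).factorial • s ∉ H) (f : G →+ AddCircle (1 : ℝ)) (t : AddCircle (1 : ℝ)) :
    ∃ f' : G →+ AddCircle (1 : ℝ), (∀ h ∈ H, f' h = f h) ∧
      dist (f' s) t ≤ 1 / ((N : ℝ) + 1) := by
  obtain ⟨g, hg⟩ := exists_character_near (QuotientAddGroup.mk' H s) N
    (by
      rw [← map_nsmul]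
      exact fun h => hs ((QuotientAddGroup.eq_zero_iff _).1 h)) (t - f s)
  refine ⟨f + g.comp (QuotientAddGroup.mk' H), fun h hh => ?_, ?_⟩
  · have : QuotientAddGroup.mk' H h = 0 := by simpa using hh
    rw [AddMonoidHom.add_apply, AddMonoidHom.comp_apply, this, map_zero, add_zero]
  · rw [AddMonoidHom.add_apply, AddMonoidHom.comp_apply]
    rw [dist_eq_norm] at hg ⊢
    convert hg using 2
    abel

/-- If every `s i` has large order modulo the preceding terms, one character meets the prescriptions
at all the `s i`: finitely many by altering at the largest index, and all of them by compactness. -/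
lemma exists_character {G W : Type*} [AddCommGroup G] [LinearOrder W] (s : W → G) (N : W → ℕ)
    (hs : ∀ i, (N i + 1).factorial • s i ∉ AddSubgroup.closure (s '' Set.Iio i))
    (t : W → AddCircle (1 : ℝ)) :
    ∃ f : G →+ AddCircle (1 : ℝ), ∀ i, dist (f (s i)) (t i) ≤ 1 / ((N i : ℝ) + 1) := by
  have hfin : ∀ F : Finset W, ∃ f : G →+ AddCircle (1 : ℝ),
      ∀ i ∈ F, dist (f (s i)) (t i) ≤ 1 / ((N i : ℝ) + 1) := by
    intro F
    induction F using Finset.induction_on_max with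
    | empty => exact ⟨0, by simp⟩
    | insert a F ha ih =>
      obtain ⟨f, hf⟩ := ih
      obtain ⟨f', h1, h2⟩ := exists_modify _ (s a) (N a) (hs a) f (t a)
      refine ⟨f', fun i hi => ?_⟩
      rcases Finset.mem_insert.1 hi with rfl | hi
      · exact h2
      · rw [h1 _ (AddSubgroup.subset_closure ⟨i, ha i hi, rfl⟩)]
        exact hf i hi
  have hcl : IsClosed (Set.range ((↑) : (G →+ AddCircle (1 : ℝ)) → G → AddCircle (1 : ℝ))) :=
    AddMonoidHom.isClosed_range_coe _ _
  obtain ⟨_, ⟨f, rfl⟩, hf⟩ := hcl.isCompact.inter_iInter_nonempty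
    (fun i => {f : G → AddCircle (1 : ℝ) | dist (f (s i)) (t i) ≤ 1 / ((N i : ℝ) + 1)})
    (fun i => isClosed_le (by fun_prop) (by fun_prop))
    (fun F => by
      obtain ⟨f, hf⟩ := hfin F
      exact ⟨f, ⟨f, rfl⟩, by simpa using hf⟩)
  exact ⟨f, by simpa using hf⟩

/-- Transfinite recursion along a well-order whose proper initial segments have fewer than `τ`
elements. -/
lemma exists_sequence {G W : Type u} [AddCommGroup G] [LinearOrder W] [WellFoundedLT W]
    (τ : Cardinal.{u}) (hW : ∀ i : W, #(Set.Iio i) < τ) (S : Set G) (hS : IsWide τ S)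
    (M : W → ℕ) (hM : ∀ i, 1 ≤ M i) :
    ∃ s : W → G, (∀ i, s i ∈ S) ∧
      ∀ i, M i • s i ∉ AddSubgroup.closure (s '' Set.Iio i) := by
  have key : ∀ (i : W) (p : ∀ j, j < i → S), ∃ x : S,
      M i • (x : G) ∉ AddSubgroup.closure (Set.range fun j : Set.Iio i => (p j j.2 : G)) := by
    intro i p
    obtain ⟨_, ⟨x, hx, rfl⟩, hx'⟩ := hS (M i) (hM i)
      (Set.range fun j : Set.Iio i => (p j j.2 : G))
      (by rintro _ ⟨j, rfl⟩; exact (p j j.2).2) (mk_range_le.trans_lt (hW i))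
    exact ⟨⟨x, hx⟩, hx'⟩
  choose F hF using key
  let s : W → S := (wellFounded_lt (α := W)).fix F
  have hs : ∀ i, s i = F i fun j _ => s j := fun i => WellFounded.fix_eq _ _ _
  refine ⟨fun i => s i, fun i => (s i).2, fun i => ?_⟩
  have := hF i fun j _ => s j
  rw [← hs i] at this
  rwa [Set.image_eq_range]

/-- Finitely many subsets of `W` are separated by their traces on some finite set. -/
lemma exists_finset_separating {W : Type*} (J : Finset (Set W)) :
    ∃ F : Finset W, ∀ X ∈ J, ∀ Y ∈ J, (∀ w ∈ F, w ∈ X ↔ w ∈ Y) → X = Y := by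
  classical
  have h : ∀ P : Set W × Set W, ∃ F : Finset W, (∀ w ∈ F, w ∈ P.1 ↔ w ∈ P.2) → P.1 = P.2 := by
    intro P
    by_cases hP : P.1 = P.2
    · exact ⟨∅, fun _ => hP⟩
    · obtain ⟨w, hw⟩ := not_forall.1 fun h => hP (Set.ext h)
      exact ⟨{w}, fun h => absurd (h w (by simp)) hw⟩
  choose F hF using h
  refine ⟨(J ×ˢ J).biUnion F, fun X hX Y hY h => hF (X, Y) fun w hw => h w ?_⟩
  exact Finset.mem_biUnion.2 ⟨(X, Y), Finset.mem_product.2 ⟨hX, hY⟩, hw⟩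

open Classical in
/-- The target function `X ↦ φ (X ∩ F) / (N + 1)` attached to the tag `(F, φ, N)`; only the values
of `φ` at subsets of `F` matter. -/
noncomputable def target {W : Type*} (p : Finset W × (Finset W →₀ ℤ) × ℕ) (X : Set W) :
    AddCircle (1 : ℝ) :=
  ((p.2.1 (p.1.filter (· ∈ X)) / ((p.2.2 + 1 : ℕ) : ℝ) : ℝ) : AddCircle (1 : ℝ))

/-- The target functions realise any finite pattern of circle values up to `1 / (N + 1)`. -/
lemma exists_tag {W : Type*} (J : Finset (Set W)) (x : Set W → AddCircle (1 : ℝ)) (N : ℕ) :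
    ∃ (F : Finset W) (φ : Finset W →₀ ℤ),
      ∀ X ∈ J, dist (target (F, φ, N) X) (x X) ≤ 1 / ((N : ℝ) + 1) := by
  classical
  obtain ⟨F, hF⟩ := exists_finset_separating J
  choose z hz using fun X => exists_int_near (N + 1) N.succ_pos (x X)
  let tr : Set W → Finset W := fun X => F.filter (· ∈ X)
  have htr : ∀ X ∈ J, ∀ Y ∈ J, tr X = tr Y → X = Y := by
    intro X hX Y hY h
    refine hF X hX Y hY fun w hw => ?_
    have := Finset.ext_iff.1 h w
    simpa [tr, hw] using this
  let φ : Finset W →₀ ℤ := ∑ X ∈ J, Finsupp.single (tr X) (z X)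
  have hφ : ∀ X ∈ J, φ (tr X) = z X := by
    intro X hX
    rw [Finsupp.finsetSum_apply, Finset.sum_eq_single X]
    · simp
    · intro Y hY hYX
      exact Finsupp.single_eq_of_ne fun h => hYX (htr X hX Y hY h).symm
    · exact fun h => absurd hX h
  refine ⟨F, φ, fun X hX => ?_⟩
  have h1 : target (F, φ, N) X = ((z X / ((N + 1 : ℕ) : ℝ) : ℝ) : AddCircle (1 : ℝ)) := by
    rw [← hφ X hX]
    simp only [target, tr]
  rw [h1]
  simpa using hz X

/-- Let `τ` be an infinite cardinal and `S` a `τ`-wide subset of an abelian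
group `G`. Then there exists a group homomorphism `π : G → 𝕋^(2^τ)` such that `π(S)` is
dense in `𝕋^(2^τ)`. -/
theorem stmt4 {G : Type u} [AddCommGroup G] (τ : Cardinal.{u}) (hτ : ℵ₀ ≤ τ)
    (S : Set G) (hS : IsWide τ S) :
    ∃ π : G →+ ((((2 : Cardinal.{u}) ^ τ)).out → AddCircle (1 : ℝ)),
      Dense (⇑π '' S) := by
  have hτ0 : #τ.ord.ToType = τ := mk_ord_toType τ
  have : Infinite τ.ord.ToType := infinite_iff.2 (by rwa [hτ0])
  have hcard : #τ.ord.ToType =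
      #(Finset τ.ord.ToType × (Finset τ.ord.ToType →₀ ℤ) × ℕ) := by
    simp [hτ, mul_eq_self]
  obtain ⟨e⟩ := Cardinal.eq.1 hcard
  have hidx : #(((2 : Cardinal.{u}) ^ τ).out) = #(Set τ.ord.ToType) := by
    rw [mk_out, mk_set, hτ0]
  obtain ⟨c⟩ := Cardinal.eq.1 hidx
  obtain ⟨s, hsS, hs⟩ := exists_sequence τ (fun i => (mk_Iio_lt i (by simp)).trans_eq hτ0) S hS
    (fun i => ((e i).2.2 + 1).factorial) (fun i => Nat.factorial_pos _)
  choose f hf using fun k => exists_character s (fun i => (e i).2.2) hs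
    (fun i => target (e i) (c k))
  refine ⟨AddMonoidHom.pi f, fun x => mem_closure_iff.2 fun U hU hxU => ?_⟩
  obtain ⟨J, u, hu, hJU⟩ := isOpen_pi_iff.1 hU x hxU
  have hev : ∀ᶠ N : ℕ in Filter.atTop, ∀ k ∈ J,
      Metric.closedBall (x k) (1 / ((N : ℝ) + 1) + 1 / ((N : ℝ) + 1)) ⊆ u k := by
    rw [Filter.eventually_all_finset]
    intro k hk
    obtain ⟨ε, hε, hball⟩ := Metric.isOpen_iff.1 (hu k hk).1 (x k) (hu k hk).2
    have hlim := (tendsto_one_div_add_atTop_nhds_zero_nat (𝕜 := ℝ)).add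
      (tendsto_one_div_add_atTop_nhds_zero_nat (𝕜 := ℝ))
    rw [add_zero] at hlim
    filter_upwards [hlim.eventually_lt_const hε] with N hN
    exact (Metric.closedBall_subset_ball hN).trans hball
  obtain ⟨N, hN⟩ := hev.exists
  obtain ⟨F, φ, hφ⟩ := exists_tag (J.map c.toEmbedding) (fun X => x (c.symm X)) N
  refine ⟨_, hJU ?_, ⟨s (e.symm (F, φ, N)), hsS _, rfl⟩⟩
  intro k hk
  refine hN k hk ?_
  have h1 := hf k (e.symm (F, φ, N))
  have h2 := hφ (c k) (Finset.mem_map_of_mem _ hk)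
  simp only [Equiv.apply_symm_apply, Equiv.symm_apply_apply] at h1 h2
  exact (dist_triangle _ _ _).trans (add_le_add h1 h2)
end

section
/- Let τ be an infinite cardinal and let S be a τ-wide subset of an abelian group G with |G| ≤ 2^(2^τ). Then there exists an injective group homomorphism π : G → 𝕋^(2^τ) such that π(S) is dense in 𝕋^(2^τ). -/
/-!
Write `𝕋` for the circle and `κ = 2 ^ τ`. By recursion along the well-order `J` of type `τ.ord`,
wideness gives `x j ∈ S` such that `n • x j ∉ ⟨x i : i < j⟩` for `1 ≤ n ≤ m j`, where `m : J → ℕ`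
may be chosen beforehand (`IsWide.exists_seq`). A character can then be steered so that its value at
`x j` is within `1 / m j` of any given target, for all `j` at once (`exists_char_greedy`). Since
`𝕋 ^ κ` has a dense subset of cardinality `τ` (`exists_independent_family`), `κ` characters with
suitable targets make the image of `{x j}` dense.

Injectivity is obtained as follows. Let `H = ⟨x j⟩`, a group of cardinality at most `τ`, and let `M`
be maximal with `M ∩ H = 0`. The coordinates are indexed by `κ × H × Bool`, again of cardinality `κ`.
The character `χ` at `(k, h, b)` kills `M`, is zero or nonzero at `h ≠ 0` according to `b`, and is
steered towards its targets only beyond the stage at which `h` is generated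
(`exists_char_coordinate`). This does not hurt density, as each target occurs cofinally often
(`exists_unbounded_labelling`). To `χ` is added `q k`, where `q` embeds `G ⧸ H` in `𝕋 ^ κ`
(`exists_separating_chars`). If `g` is in the kernel and `g ∉ M`, then `n • g - h ∈ M` for some
`n` and some nonzero `h ∈ H`, so `χ h = -n • q k g` is independent of `b`, a contradiction. If
`g ∈ M`, then every `q k` vanishes at `g`, so `g ∈ H ∩ M = 0`.
-/

open Cardinal
universe u

/-! ### Characters with prescribed values -/

/-- A character `Φ` of `A` that vanishes on `ker φ` factors through `φ : A → Q`: it descends to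
`φ(A)` and then extends to `Q` because the circle is divisible. -/
theorem exists_char_factor {A Q : Type*} [AddCommGroup A] [AddCommGroup Q] (φ : A →+ Q)
    (Φ : A →+ AddCircle (1 : ℝ)) (h : ∀ a, φ a = 0 → Φ a = 0) :
    ∃ χ : Q →+ AddCircle (1 : ℝ), ∀ a, χ (φ a) = Φ a := by
  have hker : φ.ker ≤ Φ.ker := fun a ha => h a ha
  obtain ⟨χ, hχ⟩ := (Module.Baer.of_divisible
    (AddCircle (1 : ℝ))).extension_property_addMonoidHom
    (QuotientAddGroup.kerLift φ) (QuotientAddGroup.kerLift_injective φ)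
    (QuotientAddGroup.lift φ.ker Φ hker)
  exact ⟨χ, fun a => DFunLike.congr_fun hχ (QuotientAddGroup.mk a)⟩

/-- A character may take the value `c` at `x` as soon as the order of `x` kills `c` (order `0`
meaning infinite order, where `c` is arbitrary). -/
theorem exists_char_apply {Q : Type*} [AddCommGroup Q] (x : Q) (c : AddCircle (1 : ℝ))
    (h : addOrderOf x • c = 0) : ∃ χ : Q →+ AddCircle (1 : ℝ), χ x = c := by
  obtain ⟨χ, hχ⟩ := exists_char_factor (zmultiplesHom Q x) (zmultiplesHom _ c) (by
    intro n hn
    simp only [zmultiplesHom_apply] at hn ⊢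
    obtain ⟨k, rfl⟩ := addOrderOf_dvd_iff_zsmul_eq_zero.mpr hn
    rw [mul_comm, mul_zsmul, natCast_zsmul, h, zsmul_zero])
  exact ⟨χ, by simpa using hχ 1⟩

theorem exists_addOrderOf_eq (n : ℕ) : ∃ c : AddCircle (1 : ℝ), addOrderOf c = n := by
  have : Fact ((0 : ℝ) < 1) := ⟨one_pos⟩
  rcases Nat.eq_zero_or_pos n with rfl | hn
  · refine ⟨((√2 : ℝ) : AddCircle (1 : ℝ)), ?_⟩
    rw [addOrderOf_eq_zero_iff']
    intro k hk h
    rw [← AddCircle.coe_nsmul, AddCircle.coe_eq_zero_iff] at h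
    obtain ⟨m, hm⟩ := h
    simp only [zsmul_eq_mul, mul_one, nsmul_eq_mul] at hm
    apply irrational_sqrt_two
    refine ⟨(m : ℚ) / k, ?_⟩
    have : (k : ℝ) ≠ 0 := by positivity
    push_cast
    rw [hm]
    field_simp
  · exact ⟨_, AddCircle.addOrderOf_period_div hn⟩

/-- The `m`-torsion points of the circle are `1 / N`-dense for `m > N`; for `m = 0` every point
is allowed. -/
theorem exists_nsmul_eq_zero_dist_le (m N : ℕ) (hN : 1 ≤ N) (hm : m = 0 ∨ N < m)
    (t : AddCircle (1 : ℝ)) : ∃ c : AddCircle (1 : ℝ), m • c = 0 ∧ dist c t ≤ 1 / N := by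
  rcases hm with rfl | hm
  · exact ⟨t, zero_nsmul _, by simp⟩
  · obtain ⟨r, rfl⟩ := QuotientAddGroup.mk_surjective t
    have hm0 : (0 : ℝ) < m := by exact_mod_cast (by omega : 0 < m)
    refine ⟨((round (r * m) / m : ℝ) : AddCircle (1 : ℝ)), ?_, ?_⟩
    · rw [← AddCircle.coe_nsmul, AddCircle.coe_eq_zero_iff]
      exact ⟨round (r * m), by simp; field_simp⟩
    · rw [dist_eq_norm]
      refine (QuotientAddGroup.norm_mk_le_norm (S := AddSubgroup.zmultiples (1 : ℝ)) (m := round (r * m) / m - r)).trans ?_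
      have h1 := abs_sub_round (r * m)
      have h2 : round (r * m) / m - r = (round (r * m) - r * m) / (m : ℝ) := by
        field_simp
      rw [Real.norm_eq_abs, h2, abs_div, abs_of_pos hm0, abs_sub_comm]
      have h3 : (N : ℝ) ≤ m := by exact_mod_cast hm.le
      have h4 : (0 : ℝ) < N := by exact_mod_cast hN
      gcongr
      linarith

/-- If no multiple `n • x` with `1 ≤ n ≤ N` lies in `K`, then the value at `x` of a character can
be moved to within `1 / N` of any target without changing it on `K`. -/
theorem exists_char_step {G : Type*} [AddCommGroup G] (K : AddSubgroup G)
    (χ : G →+ AddCircle (1 : ℝ)) (x : G) (N : ℕ) (hN : 1 ≤ N)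
    (hx : ∀ n, 1 ≤ n → n ≤ N → n • x ∉ K) (t : AddCircle (1 : ℝ)) :
    ∃ χ' : G →+ AddCircle (1 : ℝ), (∀ g ∈ K, χ' g = χ g) ∧ dist (χ' x) t ≤ 1 / N := by
  obtain ⟨c, hc, hct⟩ := exists_nsmul_eq_zero_dist_le (addOrderOf (x : G ⧸ K)) N hN (by
    by_contra! h
    refine hx _ (Nat.one_le_iff_ne_zero.mpr h.1) h.2 ?_
    rw [← QuotientAddGroup.eq_zero_iff]
    exact addOrderOf_nsmul_eq_zero (x : G ⧸ K)) (t - χ x)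
  obtain ⟨ψ, hψ⟩ := exists_char_apply (x : G ⧸ K) c hc
  refine ⟨χ + ψ.comp (QuotientAddGroup.mk' K), fun g hg => ?_, ?_⟩
  · simp [(QuotientAddGroup.eq_zero_iff g).mpr hg]
  · rw [dist_eq_norm] at hct ⊢
    convert hct using 2
    simp [hψ]
    abel

/-- A character can be prescribed on `N` and, up to `1 / m j`, on all `x j` with `j ∈ P`, if small
multiples of `x j` avoid the subgroup generated by `N` and the earlier `x i`. Finitely many
conditions are met one after another, in increasing order of `j`, by `exists_char_step`; the
characters of `G` form a closed subset of the compact space `G → 𝕋`, which handles all of them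
at once. -/
theorem exists_char_greedy {G J : Type*} [AddCommGroup G] [LinearOrder J] (N : AddSubgroup G)
    (χ₀ : G →+ AddCircle (1 : ℝ)) (x : J → G) (P : Set J) (m : J → ℕ) (hm : ∀ j, 1 ≤ m j)
    (hx : ∀ j ∈ P, ∀ n, 1 ≤ n → n ≤ m j → n • x j ∉ N ⊔ AddSubgroup.closure (x '' (Set.Iio j)))
    (t : J → AddCircle (1 : ℝ)) :
    ∃ χ : G →+ AddCircle (1 : ℝ), (∀ g ∈ N, χ g = χ₀ g) ∧
      ∀ j ∈ P, dist (χ (x j)) (t j) ≤ 1 / m j := by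
  classical
  have : Fact ((0 : ℝ) < 1) := ⟨one_pos⟩
  let C : Set (G → AddCircle (1 : ℝ)) :=
    {f | (∀ a b, f (a + b) = f a + f b) ∧ ∀ g ∈ N, f g = χ₀ g}
  have hC : IsClosed C := by
    simp only [C, Set.ofPred_and, Set.ofPred_forall]
    refine IsClosed.inter (isClosed_iInter fun a => isClosed_iInter fun b => ?_)
      (isClosed_iInter fun g => isClosed_iInter fun _ => ?_)
    · exact isClosed_eq (by fun_prop) (by fun_prop)
    · exact isClosed_eq (by fun_prop) (by fun_prop)
  obtain ⟨f, hfC, hf⟩ := hC.isCompact.inter_iInter_nonempty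
    (fun j : P => {f : G → AddCircle (1 : ℝ) | dist (f (x j)) (t j) ≤ 1 / m j})
    (fun j => isClosed_le (by fun_prop) (by fun_prop)) (by
      intro F
      suffices h : ∃ χ : G →+ AddCircle (1 : ℝ), (∀ g ∈ N, χ g = χ₀ g) ∧
          ∀ j ∈ F, dist (χ (x j)) (t j) ≤ 1 / m j by
        obtain ⟨χ, h1, h2⟩ := h
        exact ⟨χ, ⟨fun a b => map_add χ a b, h1⟩, by simpa using h2⟩
      induction F using Finset.induction_on_max with
      | empty => exact ⟨χ₀, fun _ _ => rfl, by simp⟩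
      | insert j F hj ih =>
        obtain ⟨χ, h1, h2⟩ := ih
        obtain ⟨χ', h3, h4⟩ := exists_char_step _ χ (x j) (m j) (hm j) (hx j j.2) (t j)
        refine ⟨χ', fun g hg => (h3 g (AddSubgroup.mem_sup_left hg)).trans (h1 g hg), ?_⟩
        intro i hi
        rcases Finset.mem_insert.mp hi with rfl | hi
        · exact h4
        · rw [h3 _ (AddSubgroup.mem_sup_right (AddSubgroup.subset_closure ⟨i, hj i hi, rfl⟩))]
          exact h2 i hi)
  exact ⟨AddMonoidHom.mk' f hfC.1, hfC.2, by simpa using hf⟩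

/-! ### Embedding a group of cardinality at most `2 ^ κ` in `𝕋 ^ κ` -/

/-- The combinatorial core of the Hewitt–Marczewski–Pondiczery theorem: up to `2 ^ |A|` points
carry `|A|` functions to `ℕ` that realize every finite pattern. The points are viewed as subsets
of `A`, and a function is given by a finite `T ⊆ A` together with a finitely supported assignment
of values to the traces on `T`. -/
theorem exists_independent_family (A : Type u) [Infinite A] (Y : Type u)
    (hY : #Y ≤ 2 ^ #A) :
    ∃ d : A → Y → ℕ, ∀ (F : Finset Y) (t : Y → ℕ), ∃ a, ∀ y ∈ F, d a y = t y := by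
  classical
  have hcard : #(Finset A × (Finset A →₀ ℕ)) = #A := by
    rw [mk_prod, mk_finsupp_nat, mk_finset_of_infinite]
    simp
  obtain ⟨e⟩ := Cardinal.eq.mp hcard
  rw [← mk_set] at hY
  obtain ⟨s⟩ := hY
  refine ⟨fun a y => (e.symm a).2 ((e.symm a).1.filter (· ∈ s y)), fun F t => ?_⟩
  obtain ⟨T, hT⟩ : ∃ T : Finset A, ∀ y ∈ F, ∀ z ∈ F,
      T.filter (· ∈ s y) = T.filter (· ∈ s z) → y = z := by
    have hsep : ∀ p : Y × Y, ∃ a, p.1 ≠ p.2 → ¬ (a ∈ s p.1 ↔ a ∈ s p.2) := by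
      intro p
      by_cases hp : p.1 = p.2
      · exact ⟨Classical.arbitrary A, fun h => absurd hp h⟩
      · by_contra! h
        exact hp (s.injective (Set.ext fun a => (h a).2))
    choose w hw using hsep
    refine ⟨(F ×ˢ F).image w, fun y hy z hz h => ?_⟩
    by_contra hne
    refine hw (y, z) hne ?_
    have hmem : w (y, z) ∈ (F ×ˢ F).image w :=
      Finset.mem_image_of_mem w (Finset.mem_product.mpr ⟨hy, hz⟩)
    simpa only [Finset.mem_filter, hmem, true_and] using Finset.ext_iff.mp h (w (y, z))
  let f : Finset A →₀ ℕ := ∑ y ∈ F, Finsupp.single (T.filter (· ∈ s y)) (t y)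
  refine ⟨e (T, f), fun y hy => ?_⟩
  simp only [Equiv.symm_apply_apply, f, Finsupp.finsetSum_apply]
  rw [Finset.sum_eq_single y]
  · simp
  · intro z hz hzy
    exact Finsupp.single_eq_of_ne fun h => hzy (hT z hz y hy h.symm)
  · exact fun h => absurd hy h

/-- There is a set `B` whose cyclic subgroups `⟨b⟩` form a direct sum that is essential in `Q`. -/
theorem exists_maximal_independent (Q : Type*) [AddCommGroup Q] :
    ∃ B : Set Q,
      (∀ f ∈ Finsupp.supported ℤ ℤ B, Finsupp.linearCombination ℤ id f = 0 →
        ∀ b, f b • b = 0) ∧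
      ∀ q : Q, q ≠ 0 → ∃ n : ℤ, ∃ f ∈ Finsupp.supported ℤ ℤ B,
        n • q = Finsupp.linearCombination ℤ id f ∧ n • q ≠ 0 := by
  classical
  obtain ⟨B, -, hB⟩ := zorn_subset_nonempty
    {B : Set Q | ∀ f ∈ Finsupp.supported ℤ ℤ B, Finsupp.linearCombination ℤ id f = 0 →
        ∀ b, f b • b = 0} (by
      intro c hc hchain hne
      refine ⟨⋃₀ c, fun f hf => ?_, fun s hs => Set.subset_sUnion_of_mem hs⟩
      obtain ⟨s, hs, hfs⟩ := DirectedOn.exists_mem_subset_of_finset_subset_biUnion (f := id) hne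
        hchain.directedOn (s := f.support) (by
          rw [Finsupp.mem_supported] at hf
          simpa [Set.sUnion_eq_biUnion] using hf)
      exact hc hs f ((Finsupp.mem_supported _ _).mpr hfs)) ∅ (by
      intro f hf _ b
      have : f = 0 := by simpa using hf
      simp [this])
  refine ⟨B, hB.prop, fun q hq => ?_⟩
  by_contra! h
  have hins : insert q B ∈ {B : Set Q | ∀ f ∈ Finsupp.supported ℤ ℤ B,
      Finsupp.linearCombination ℤ id f = 0 → ∀ b, f b • b = 0} := by
    intro f hf h0 b
    have hdec := Finsupp.single_add_erase q f
    have hsupp : f.erase q ∈ Finsupp.supported ℤ ℤ B := by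
      rw [Finsupp.mem_supported] at hf ⊢
      intro y hy
      simp only [Finsupp.support_erase, Finset.coe_erase, Set.mem_sdiff,
        Set.mem_singleton_iff] at hy
      exact (hf hy.1).resolve_left hy.2
    rw [← hdec, map_add, Finsupp.linearCombination_single, id] at h0
    have hq0 := h (f q) (-f.erase q) (neg_mem hsupp)
      (by rw [map_neg]; exact eq_neg_of_add_eq_zero_left h0)
    rw [hq0, zero_add] at h0
    rcases eq_or_ne b q with rfl | hb
    · exact hq0
    · simpa [Finsupp.erase_ne hb] using hB.prop _ hsupp h0 b
  have hqB : q ∈ B := hB.le_of_ge hins (Set.subset_insert q B) (Set.mem_insert q B)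
  have h1 := h 1 (Finsupp.single q 1) (Finsupp.single_mem_supported ℤ 1 hqB) (by simp)
  exact hq (by rwa [one_zsmul] at h1)

/-- A group of cardinality at most `2 ^ |A|` embeds in `𝕋 ^ A`. On the direct sum `⨁ ⟨b⟩` of an
independent set the characters are `b ↦ d a b • c b`, where `c b` has the same order as `b` and
`d` realizes all finite patterns; since the sum is essential, it suffices to separate its points. -/
theorem exists_separating_chars (A : Type u) [Infinite A] (Q : Type u) [AddCommGroup Q]
    (hQ : #Q ≤ 2 ^ #A) :
    ∃ j : A → Q →+ AddCircle (1 : ℝ), ∀ q, (∀ a, j a q = 0) → q = 0 := by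
  classical
  obtain ⟨d, hd⟩ := exists_independent_family A Q hQ
  obtain ⟨B, hB, hess⟩ := exists_maximal_independent Q
  choose c hc using fun b : Q => exists_addOrderOf_eq (addOrderOf b)
  have hcz : ∀ (b : Q) (n : ℤ), n • c b = 0 ↔ n • b = 0 := fun b n => by
    rw [← addOrderOf_dvd_iff_zsmul_eq_zero, ← addOrderOf_dvd_iff_zsmul_eq_zero, hc]
  have key : ∀ a, ∃ χ : Q →+ AddCircle (1 : ℝ), ∀ f ∈ Finsupp.supported ℤ ℤ B,
      χ (Finsupp.linearCombination ℤ id f) =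
        Finsupp.linearCombination ℤ (fun b => d a b • c b) f := by
    intro a
    obtain ⟨χ, hχ⟩ := exists_char_factor
      ((Finsupp.linearCombination ℤ (id : Q → Q)).comp
        (Finsupp.supported ℤ ℤ B).subtype).toAddMonoidHom
      ((Finsupp.linearCombination ℤ (fun b => d a b • c b)).comp
        (Finsupp.supported ℤ ℤ B).subtype).toAddMonoidHom (by
      rintro ⟨f, hf⟩ h0
      change Finsupp.linearCombination ℤ (fun b => d a b • c b) f = 0
      rw [Finsupp.linearCombination_apply]
      refine Finset.sum_eq_zero fun b _ => ?_
      change f b • d a b • c b = 0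
      rw [smul_comm, (hcz b (f b)).mpr (hB f hf h0 b), smul_zero])
    exact ⟨χ, fun f hf => hχ ⟨f, hf⟩⟩
  choose j hj using key
  refine ⟨j, fun q hq => ?_⟩
  by_contra hne
  obtain ⟨n, f, hf, hnf, hn0⟩ := hess q hne
  obtain ⟨b, hb⟩ : ∃ b, f b • b ≠ 0 := by
    by_contra! h
    rw [hnf, Finsupp.linearCombination_apply] at hn0
    exact hn0 (Finset.sum_eq_zero fun b _ => h b)
  obtain ⟨a, ha⟩ := hd (insert b f.support) (fun y => if y = b then 1 else 0)
  have h1 := hj a f hf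
  rw [← hnf, map_zsmul, hq, smul_zero, Finsupp.linearCombination_apply, Finsupp.sum,
    Finset.sum_eq_single b] at h1
  · rw [ha b (Finset.mem_insert_self _ _), if_pos rfl, one_smul] at h1
    exact hb ((hcz b _).mp h1.symm)
  · intro y hy hyb
    rw [ha y (Finset.mem_insert_of_mem hy), if_neg hyb, zero_smul, smul_zero]
  · intro hbs
    exact absurd (by simp [Finsupp.notMem_support_iff.mp hbs]) hb

/-! ### The essential complement and the generic sequence -/

/-- A subgroup `M` maximal among those meeting `H` trivially; then `H` is essential in `G ⧸ M`. -/
theorem exists_essential_complement {G : Type*} [AddCommGroup G] (H : AddSubgroup G) :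
    ∃ M : AddSubgroup G, (∀ g ∈ M, g ∈ H → g = 0) ∧
      ∀ g ∉ M, ∃ n : ℤ, ∃ h ∈ H, h ≠ 0 ∧ n • g - h ∈ M := by
  obtain ⟨M, -, hM⟩ := zorn_le_nonempty₀ {M : AddSubgroup G | ∀ g ∈ M, g ∈ H → g = 0} (by
      intro c hc hchain y hy
      refine ⟨sSup c, fun g hg hgH => ?_, fun z hz => le_sSup hz⟩
      obtain ⟨K, hK, hgK⟩ := (AddSubgroup.mem_sSup_of_directedOn ⟨y, hy⟩ hchain.directedOn).mp hg
      exact hc hK g hgK hgH) ⊥ (by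
      intro g hg _
      simpa using hg)
  refine ⟨M, hM.prop, fun g hg => ?_⟩
  by_contra! h
  refine hg (hM.le_of_ge (y := M ⊔ AddSubgroup.zmultiples g) ?_ le_sup_left
    (AddSubgroup.mem_sup_right (AddSubgroup.mem_zmultiples g)))
  intro y hy hyH
  obtain ⟨a, ha, b, hb, rfl⟩ := AddSubgroup.mem_sup.mp hy
  obtain ⟨n, rfl⟩ := AddSubgroup.mem_zmultiples_iff.mp hb
  by_contra hne
  refine h n _ hyH hne ?_
  have : n • g - (a + n • g) = -a := by abel
  rw [this]
  exact neg_mem ha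

/-- Wideness, applied with multiplier `(m j)!`, yields by transfinite recursion a sequence in `S`
no small multiple of whose terms lies in the subgroup generated by the preceding ones. -/
theorem IsWide.exists_seq {G : Type u} [AddCommGroup G] {τ : Cardinal.{u}} {S : Set G}
    (hS : IsWide τ S) (m : τ.ord.ToType → ℕ) :
    ∃ x : τ.ord.ToType → G, (∀ j, x j ∈ S) ∧
      ∀ j n, 1 ≤ n → n ≤ m j → n • x j ∉ AddSubgroup.closure (x '' Set.Iio j) := by
  have step : ∀ (j : τ.ord.ToType) (p : ∀ i, i < j → S), ∃ s : S, (m j).factorial • (s : G) ∉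
      AddSubgroup.closure (Set.range fun i : Set.Iio j => (p i i.2 : G)) := by
    intro j p
    obtain ⟨_, ⟨s, hs, rfl⟩, h⟩ := hS (m j).factorial (Nat.factorial_pos _)
      (Set.range fun i : Set.Iio j => (p i i.2 : G)) (by
        rintro _ ⟨i, rfl⟩
        exact (p i i.2).2)
      (mk_range_le.trans_lt (by simpa using mk_Iio_lt j (by simp)))
    exact ⟨⟨s, hs⟩, h⟩
  choose F hF using step
  let x : τ.ord.ToType → S := wellFounded_lt.fix F
  have hx : ∀ j, x j = F j fun i _ => x i := fun j => wellFounded_lt.fix_eq F j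
  refine ⟨fun j => x j, fun j => (x j).2, fun j n hn hnm hmem => ?_⟩
  refine hF j (fun i _ => x i) ?_
  rw [← hx]
  obtain ⟨k, hk⟩ := Nat.dvd_factorial hn hnm
  rw [hk, mul_comm, mul_nsmul']
  refine nsmul_mem ?_ k
  rwa [Set.image_eq_range] at hmem

theorem mk_closure_range_le {G J : Type u} [AddCommGroup G] [Infinite J] (x : J → G) :
    #(AddSubgroup.closure (Set.range x)) ≤ #J := by
  have h : ∀ g : AddSubgroup.closure (Set.range x), ∃ f : J →₀ ℤ,
      Finsupp.linearCombination ℤ x f = g := by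
    rintro ⟨g, hg⟩
    rw [← Submodule.span_int_eq_addSubgroupClosure] at hg
    exact Finsupp.mem_span_range_iff_exists_finsupp.mp hg
  choose f hf using h
  calc _ ≤ #(J →₀ ℤ) := mk_le_of_injective (f := f) fun a b hab =>
        Subtype.ext (by rw [← hf a, ← hf b, hab])
    _ = #J := by simp

theorem exists_mem_closure_image_Iic {G J : Type*} [AddCommGroup G] [LinearOrder J] [Nonempty J]
    (x : J → G) {g : G} (hg : g ∈ AddSubgroup.closure (Set.range x)) :
    ∃ a, g ∈ AddSubgroup.closure (x '' Set.Iic a) := by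
  have mono : ∀ {a b : J}, a ≤ b →
      AddSubgroup.closure (x '' Set.Iic a) ≤ AddSubgroup.closure (x '' Set.Iic b) := fun hab =>
    AddSubgroup.closure_mono (Set.image_mono (Set.Iic_subset_Iic.mpr hab))
  induction hg using AddSubgroup.closure_induction with
  | mem y hy =>
    obtain ⟨j, rfl⟩ := hy
    exact ⟨j, AddSubgroup.subset_closure ⟨j, le_rfl, rfl⟩⟩
  | zero => exact ⟨Classical.arbitrary J, zero_mem _⟩
  | add y z _ _ hy hz =>
    obtain ⟨a, ha⟩ := hy
    obtain ⟨b, hb⟩ := hz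
    exact ⟨max a b, add_mem (mono (le_max_left a b) ha) (mono (le_max_right a b) hb)⟩
  | neg y _ hy =>
    obtain ⟨a, ha⟩ := hy
    exact ⟨a, neg_mem ha⟩

/-! ### The coordinates and the embedding -/

/-- The character used for one coordinate: it kills `M`, vanishes at `h` or not according to `b`,
and follows the targets `t j` for all `j` beyond the stage `a` at which `h` has been generated. -/
theorem exists_char_coordinate {G J : Type*} [AddCommGroup G] [LinearOrder J] (x : J → G)
    (m : J → ℕ) (hm : ∀ j, 1 ≤ m j)
    (hx : ∀ j n, 1 ≤ n → n ≤ m j → n • x j ∉ AddSubgroup.closure (x '' Set.Iio j))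
    (M : AddSubgroup G) (hM : ∀ g ∈ M, g ∈ AddSubgroup.closure (Set.range x) → g = 0)
    (h : G) (a : J) (ha : h ∈ AddSubgroup.closure (x '' Set.Iic a)) (b : Bool)
    (t : J → AddCircle (1 : ℝ)) :
    ∃ χ : G →+ AddCircle (1 : ℝ), (∀ g ∈ M, χ g = 0) ∧ (b = false → χ h = 0) ∧
      (b = true → h ≠ 0 → χ h ≠ 0) ∧ ∀ j, a < j → dist (χ (x j)) (t j) ≤ 1 / m j := by
  have hrange : ∀ s : Set J,
      AddSubgroup.closure (x '' s) ≤ AddSubgroup.closure (Set.range x) := fun s =>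
    AddSubgroup.closure_mono (Set.image_subset_range x s)
  obtain ⟨χ₀, h1, h2, h3⟩ : ∃ χ₀ : G →+ AddCircle (1 : ℝ), (∀ g ∈ M, χ₀ g = 0) ∧
      (b = false → χ₀ h = 0) ∧ (b = true → h ≠ 0 → χ₀ h ≠ 0) := by
    cases b with
    | false => exact ⟨0, by simp, by simp, by simp⟩
    | true =>
      obtain ⟨c, hc⟩ := exists_addOrderOf_eq (addOrderOf (h : G ⧸ M))
      obtain ⟨ψ, hψ⟩ := exists_char_apply (h : G ⧸ M) c (hc ▸ addOrderOf_nsmul_eq_zero c)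
      refine ⟨ψ.comp (QuotientAddGroup.mk' M), fun g hg => ?_, by simp, fun _ hne h0 => ?_⟩
      · simp [(QuotientAddGroup.eq_zero_iff g).mpr hg]
      · have hc0 : c = 0 := by rw [← hψ]; exact h0
        -- `h` would have order `1` modulo `M`, so `h ∈ M ∩ H = 0`
        rw [hc0, addOrderOf_zero, eq_comm, AddMonoid.addOrderOf_eq_one_iff,
          QuotientAddGroup.eq_zero_iff] at hc
        exact hne (hM h hc (hrange _ ha))
  obtain ⟨χ, h4, h5⟩ := exists_char_greedy (M ⊔ AddSubgroup.closure (x '' Set.Iic a)) χ₀ x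
    (Set.Ioi a) m hm (by
      intro j hj n hn hnm hmem
      have hle : AddSubgroup.closure (x '' Set.Iic a) ≤ AddSubgroup.closure (x '' Set.Iio j) :=
        AddSubgroup.closure_mono (Set.image_mono fun i hi => lt_of_le_of_lt hi hj)
      rw [sup_assoc, sup_eq_right.mpr hle] at hmem
      obtain ⟨u, hu, v, hv, huv⟩ := AddSubgroup.mem_sup.mp hmem
      have hu0 : u = 0 := by
        refine hM u hu ?_
        rw [eq_sub_of_add_eq huv]
        exact sub_mem (nsmul_mem (AddSubgroup.subset_closure (Set.mem_range_self j)) n) (hrange _ hv)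
      rw [hu0, zero_add] at huv
      exact hx j n hn hnm (huv ▸ hv)) t
  have h6 : χ h = χ₀ h := h4 h (AddSubgroup.mem_sup_right ha)
  exact ⟨χ, fun g hg => (h4 g (AddSubgroup.mem_sup_left hg)).trans (h1 g hg),
    fun hb => h6 ▸ h2 hb, fun hb hne => h6 ▸ h3 hb hne, fun j hj => h5 j hj⟩

/-- A labelling of the well-order of type `τ.ord` in which every label occurs cofinally. -/
theorem exists_unbounded_labelling {τ : Cardinal.{u}} (hτ : ℵ₀ ≤ τ) :
    ∃ L : τ.ord.ToType → τ.ord.ToType × ℕ, ∀ p a, ∃ j, a < j ∧ L j = p := by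
  have hJ : #τ.ord.ToType = τ := by simp
  have hcard : #τ.ord.ToType = #((τ.ord.ToType × ℕ) × τ.ord.ToType) := by
    simp only [mk_prod, hJ, lift_id, mk_nat, lift_aleph0, lift_uzero]
    rw [mul_aleph0_eq hτ, mul_eq_self hτ]
  obtain ⟨e⟩ := Cardinal.eq.mp hcard
  refine ⟨fun j => (e j).1, fun p a => ?_⟩
  by_contra! h
  have hle : τ ≤ #(Set.Iic a) := by
    conv_lhs => rw [← hJ]
    refine mk_le_of_injective (f := fun k => ⟨e.symm (p, k), ?_⟩) ?_
    · by_contra hk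
      exact h _ (not_le.mp hk) (by simp)
    · intro k l hkl
      simpa using hkl
  refine hle.not_gt ?_
  rw [← Set.Iio_insert]
  exact mk_insert_le.trans_lt
    (add_lt_of_lt hτ (by simpa using mk_Iio_lt a (by simp)) (one_lt_aleph0.trans_le hτ))

/-- Let `τ` be an infinite cardinal and `S` a `τ`-wide subset of an abelian
group `G` with `|G| ≤ 2^(2^τ)`. Then there exists an injective group homomorphism
`π : G → 𝕋^(2^τ)` such that `π(S)` is dense in `𝕋^(2^τ)`. -/
theorem stmt5 {G : Type u} [AddCommGroup G] (τ : Cardinal.{u}) (hτ : ℵ₀ ≤ τ)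
    (S : Set G) (hS : IsWide τ S)
    (hG : #G ≤ (2 : Cardinal.{u}) ^ ((2 : Cardinal.{u}) ^ τ)) :
    ∃ π : G →+ ((((2 : Cardinal.{u}) ^ τ)).out → AddCircle (1 : ℝ)),
      Function.Injective π ∧ Dense (⇑π '' S) := by
  classical
  have : Fact ((0 : ℝ) < 1) := ⟨one_pos⟩
  set J := τ.ord.ToType with hJdef
  set K := ((2 : Cardinal.{u}) ^ τ).out with hKdef
  have hJ : #J = τ := by simp [hJdef]
  have hK : #K = 2 ^ τ := mk_out _
  have hκ : τ < 2 ^ τ := cantor τ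
  have : Infinite J := infinite_iff.mpr (hτ.trans_eq hJ.symm)
  have : Infinite K := infinite_iff.mpr ((hτ.trans hκ.le).trans_eq hK.symm)
  obtain ⟨L, hL⟩ := exists_unbounded_labelling hτ
  obtain ⟨x, hxS, hx⟩ := hS.exists_seq fun j => (L j).2 + 1
  set H := AddSubgroup.closure (Set.range x) with hH
  obtain ⟨M, hM, hMess⟩ := exists_essential_complement H
  obtain ⟨q, hq⟩ := exists_separating_chars K (G ⧸ H) (by
    rw [hK]
    exact (mk_le_of_surjective (QuotientAddGroup.mk_surjective (s := H))).trans hG)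
  have hI : #K = #(K × H × Bool) := by
    have hHJ : #H ≤ τ := (mk_closure_range_le x).trans_eq hJ
    have hHB : #(H × Bool) ≤ #K := by
      rw [mk_prod, hK]
      simp only [lift_uzero, mk_bool, lift_ofNat]
      exact (mul_le_mul' hHJ (natCast_lt_aleph0 (n := 2)).le).trans
        ((mul_aleph0_eq hτ).trans_le hκ.le)
    rw [mk_prod, lift_id, lift_id, mul_eq_left (aleph0_le_mk K) hHB (mk_ne_zero _)]
  obtain ⟨e⟩ := Cardinal.eq.mp hI
  obtain ⟨d, hd⟩ := exists_independent_family J (K × H × Bool) (by rw [← hI, hK, hJ])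
  choose a ha using fun h : H => exists_mem_closure_image_Iic x h.2
  choose χ hχM hχ0 hχ1 hχd using fun i : K × H × Bool =>
    exists_char_coordinate x (fun j => (L j).2 + 1) (fun j => Nat.le_add_left 1 _) hx M hM
      i.2.1 (a i.2.1) (ha i.2.1) i.2.2
      (fun j => TopologicalSpace.denseSeq (AddCircle (1 : ℝ)) (d (L j).1 i))
  -- the perturbation by `q` vanishes on `H`, hence does not affect the values at the `x j`
  refine ⟨AddMonoidHom.pi fun k => χ (e k) + (q (e k).1).comp (QuotientAddGroup.mk' H), ?_, ?_⟩
  · rw [injective_iff_map_eq_zero]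
    intro g hg
    have hg' : ∀ i : K × H × Bool, χ i g + q i.1 (g : G ⧸ H) = 0 := fun i => by
      simpa using congrFun hg (e.symm i)
    by_cases hgM : g ∈ M
    · refine hM g hgM ((QuotientAddGroup.eq_zero_iff g).mp (hq _ fun k => ?_))
      simpa [hχM _ g hgM] using hg' (k, 0, false)
    · exfalso
      obtain ⟨n, h, hhH, hne, hnh⟩ := hMess g hgM
      have hval : ∀ i, χ i h = - (n • q i.1 (g : G ⧸ H)) := fun i => by
        have h1 := hχM i _ hnh
        rw [map_sub, map_zsmul, sub_eq_zero] at h1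
        rw [← h1, eq_neg_of_add_eq_zero_left (hg' i), smul_neg]
      let k := Classical.arbitrary K
      -- the value at `h` cannot depend on the Boolean coordinate, yet by construction it does
      refine hχ1 (k, ⟨h, hhH⟩, true) rfl hne ?_
      exact (hval _).trans ((hval (k, ⟨h, hhH⟩, false)).symm.trans (hχ0 _ rfl))
  · rw [dense_iff_inter_open]
    rintro U hU ⟨p, hp⟩
    obtain ⟨F, u, hu, hFU⟩ := isOpen_pi_iff.mp hU p hp
    obtain ⟨ε, hε, hball⟩ : ∃ ε > 0, ∀ k ∈ F, Metric.ball (p k) ε ⊆ u k := by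
      have : ∀ k, ∃ ε > 0, k ∈ F → Metric.ball (p k) ε ⊆ u k := fun k => by
        by_cases hk : k ∈ F
        · obtain ⟨ε, hε, h⟩ := Metric.isOpen_iff.mp (hu k hk).1 _ (hu k hk).2
          exact ⟨ε, hε, fun _ => h⟩
        · exact ⟨1, one_pos, fun h => absurd h hk⟩
      choose ε hε hb using this
      obtain ⟨δ, hδ, hδF⟩ : ∃ δ > 0, ∀ k ∈ F, δ ≤ ε k := by
        rcases F.eq_empty_or_nonempty with rfl | hF
        · exact ⟨1, one_pos, by simp⟩
        · exact ⟨F.inf' hF ε, (Finset.lt_inf'_iff hF).mpr fun k _ => hε k,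
            fun k hk => Finset.inf'_le ε hk⟩
      exact ⟨δ, hδ, fun k hk => (Metric.ball_subset_ball (hδF k hk)).trans (hb k hk)⟩
    have hseq : ∀ k, ∃ n, dist (TopologicalSpace.denseSeq (AddCircle (1 : ℝ)) n) (p k) < ε / 2 :=
      fun k => by
        obtain ⟨n, hn⟩ := (TopologicalSpace.denseRange_denseSeq
          (AddCircle (1 : ℝ))).exists_dist_lt (p k) (half_pos hε)
        exact ⟨n, by rwa [dist_comm]⟩
    choose t ht using hseq
    obtain ⟨l, hl⟩ := hd (F.image e) (fun i => t (e.symm i))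
    obtain ⟨N, hN⟩ := exists_nat_one_div_lt (half_pos hε)
    obtain ⟨b, hb⟩ := (F.image fun k => a (e k).2.1).exists_le
    obtain ⟨j, hbj, hj⟩ := hL (l, N) b
    refine ⟨_, hFU ?_, x j, hxS j, rfl⟩
    intro k hk
    refine hball k hk ?_
    have hxH : ((x j : G) : G ⧸ H) = 0 :=
      (QuotientAddGroup.eq_zero_iff _).mpr (AddSubgroup.subset_closure ⟨j, rfl⟩)
    have h1 := hχd (e k) j ((hb _ (Finset.mem_image_of_mem _ hk)).trans_lt hbj)
    rw [hj, hl _ (Finset.mem_image_of_mem _ hk), Equiv.symm_apply_apply] at h1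
    have h2 := ht k
    rw [Metric.mem_ball]
    simp only [AddMonoidHom.pi_apply, AddMonoidHom.add_apply, AddMonoidHom.comp_apply,
      QuotientAddGroup.mk'_apply, hxH, map_zero, add_zero]
    push_cast at h1
    linarith [dist_triangle (χ (e k) (x j))
      (TopologicalSpace.denseSeq (AddCircle (1 : ℝ)) (t k)) (p k)]
end

section
/- Let κ be a cardinal with κ > 𝔠 (the cardinality of the continuum) and let τ = log κ. For a subset S of an abelian group G, the following are equivalent: (i) there exists a group homomorphism ϖ : G → 𝕋^κ such that ϖ(S) is dense in 𝕋^κ; (ii) τ ≤ |nS| for every integer n ≥ 1; (iii) S is τ-wide. -/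
/-!
Write `τ = log κ`; since `κ > 𝔠`, `τ` is uncountable.

(i) ⇒ (ii): multiplication by `n` is a continuous surjection of `𝕋^κ`, so the image of `nS` is dense
as well. A dense set `D` of `𝕋^κ` satisfies `κ ≤ 2^|D|` (`mk_le_two_power_of_dense`), hence `τ ≤ |D|`.

(ii) ⇔ (iii): a subgroup generated by fewer than `τ` elements has size `< τ` (`mk_closure_lt`), so it
cannot contain `nS` when `|nS| ≥ τ`. Conversely, if `|nS| < τ`, a transversal of `s ↦ n • s` on `S`
contradicts wideness.

(iii) ⇒ (i): as `κ ≤ 2^τ`, the coordinates may be taken to be subsets of a set `X` of size `τ`. There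
are `τ` rational step functions on the power set of `X` depending on finitely many points of `X`, and
they approximate every finite prescription of values (`exists_stepData`), as in the
Hewitt–Marczewski–Pondiczery theorem. Well-order these step functions `t`, each with a precision `N`,
in type `τ`, and use wideness to choose `s t ∈ S` recursively with `N! • s t` outside the subgroup
generated by the earlier choices (`exists_transfinite_sequence`). Then `s t` has order at least `N`
modulo that subgroup, so the values of characters of `G` at all the `s t` can be prescribed
simultaneously up to `1/N` (`exists_character_near_family`). Let the character of index `x ⊆ X` send
`s t` near the value of `t` at `x`; together these characters map `S` onto a dense set.
-/


open Cardinal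

universe u

/-- `log κ = min {τ ≥ ℵ₀ : κ ≤ 2^τ}`. -/
noncomputable def clog (κ : Cardinal.{u}) : Cardinal.{u} :=
  sInf {τ : Cardinal.{u} | ℵ₀ ≤ τ ∧ κ ≤ (2 : Cardinal.{u}) ^ τ}

/-! ### Characters with prescribed approximate values -/

/-- The `m`-torsion points of the circle are `1/m`-spaced; for `m = 0` every point qualifies. -/
theorem exists_torsion_near_s6 (m N : ℕ) (hN : 1 ≤ N) (h : m = 0 ∨ N ≤ m) (v : AddCircle (1 : ℝ)) :
    ∃ y : AddCircle (1 : ℝ), m • y = 0 ∧ dist y v ≤ 1 / N := by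
  rcases Nat.eq_zero_or_pos m with rfl | hm
  · exact ⟨v, by simp, by simp⟩
  have hNm : N ≤ m := by omega
  induction v using QuotientAddGroup.induction_on with
  | H r =>
  have hm' : (0 : ℝ) < m := by exact_mod_cast hm
  have hN' : (0 : ℝ) < N := by exact_mod_cast hN
  have hNm' : (N : ℝ) ≤ m := by exact_mod_cast hNm
  refine ⟨((round (m * r) / m : ℝ) : AddCircle (1 : ℝ)), ?_, ?_⟩
  · rw [← AddCircle.coe_nsmul, AddCircle.coe_eq_zero_iff]
    refine ⟨round (m * r), ?_⟩
    simp only [zsmul_eq_mul, mul_one, nsmul_eq_mul]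
    field_simp
  · rw [dist_eq_norm]
    refine (QuotientAddGroup.norm_mk_le_norm (S := AddSubgroup.zmultiples (1 : ℝ))
      (m := (round (m * r) / m : ℝ) - r)).trans ?_
    rw [Real.norm_eq_abs]
    have h1 : (round (m * r) / m : ℝ) - r = -((m * r - round (m * r)) / m) := by
      field_simp; ring
    rw [h1, abs_neg, abs_div, abs_of_pos hm']
    calc |m * r - round (m * r)| / m ≤ 1 / m := by
          gcongr
          exact (abs_sub_round _).trans (by norm_num)
      _ ≤ 1 / N := by gcongr

/-- The hypothesis forces `g` to have infinite order or order at least `N`, so a character of `⟨g⟩`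
can move `g` to within `1/N` of any point; divisibility of the circle extends it to `G`. -/
theorem exists_character_near_s6 {G : Type u} [AddCommGroup G] (g : G) (N : ℕ) (hN : 1 ≤ N)
    (hg : N.factorial • g ≠ 0) (v : AddCircle (1 : ℝ)) :
    ∃ ψ : G →+ AddCircle (1 : ℝ), dist (ψ g) v ≤ 1 / N := by
  have horder : addOrderOf g = 0 ∨ N ≤ addOrderOf g := by
    by_contra! hcon
    refine hg (addOrderOf_dvd_iff_nsmul_eq_zero.mp ?_)
    exact Nat.dvd_factorial (Nat.pos_of_ne_zero hcon.1) hcon.2.le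
  obtain ⟨y, hy, hyv⟩ := exists_torsion_near_s6 _ N hN horder v
  let f : ZMod (addOrderOf g) →+ G :=
    ZMod.lift (addOrderOf g) ⟨zmultiplesHom G g, by simp [addOrderOf_nsmul_eq_zero]⟩
  let q : ZMod (addOrderOf g) →+ AddCircle (1 : ℝ) :=
    ZMod.lift (addOrderOf g) ⟨zmultiplesHom _ y, by simpa using hy⟩
  have hf : Function.Injective f := by
    refine (ZMod.lift_injective _).mpr fun k hk => ?_
    rw [ZMod.intCast_zmod_eq_zero_iff_dvd]
    exact addOrderOf_dvd_iff_zsmul_eq_zero.mpr (by simpa using hk)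
  obtain ⟨ψ, hψ⟩ := (Module.Baer.of_divisible _).extension_property_addMonoidHom f hf q
  refine ⟨ψ, ?_⟩
  have h1 : f 1 = g := by
    have := ZMod.lift_coe (addOrderOf g) ⟨zmultiplesHom G g, by simp [addOrderOf_nsmul_eq_zero]⟩ 1
    simpa [f] using this
  have h2 : q 1 = y := by
    have := ZMod.lift_coe (addOrderOf g) ⟨zmultiplesHom _ y, by simpa using hy⟩ 1
    simpa [q] using this
  have h3 : ψ g = y := by rw [← h2, ← hψ, AddMonoidHom.comp_apply, h1]
  rwa [h3]

/-- If each `s t` has large order modulo the subgroup generated by its predecessors, the values of a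
character at all the `s t` can be prescribed simultaneously, up to the errors `1 / N t`. Finitely many
prescriptions are met by correcting at the largest index with a character of the quotient by its
predecessors; compactness of the space of characters handles all of them at once. -/
theorem exists_character_near_family {G : Type u} [AddCommGroup G] {T : Type u} [LinearOrder T]
    (s : T → G) (N : T → ℕ) (hN : ∀ t, 1 ≤ N t)
    (hs : ∀ t, (N t).factorial • s t ∉ AddSubgroup.closure (s '' Set.Iio t))
    (v : T → AddCircle (1 : ℝ)) :
    ∃ χ : G →+ AddCircle (1 : ℝ), ∀ t, dist (χ (s t)) (v t) ≤ 1 / N t := by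
  -- The finite case, by induction adding the largest index last.
  have hfin : ∀ F : Finset T, ∃ χ : G →+ AddCircle (1 : ℝ),
      ∀ t ∈ F, dist (χ (s t)) (v t) ≤ 1 / N t := by
    intro F
    induction F using Finset.induction_on_max with
    | empty => exact ⟨0, by simp⟩
    | insert t F hmax ih =>
      obtain ⟨χ, hχ⟩ := ih
      let H := AddSubgroup.closure (s '' Set.Iio t)
      obtain ⟨ψ, hψ⟩ := exists_character_near_s6 (QuotientAddGroup.mk' H (s t)) (N t) (hN t)
        (by
          rw [← map_nsmul]
          exact fun h => hs t ((QuotientAddGroup.eq_zero_iff _).mp h)) (v t - χ (s t))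
      refine ⟨χ + ψ.comp (QuotientAddGroup.mk' H), fun u hu => ?_⟩
      rcases Finset.mem_insert.mp hu with rfl | hu
      · rw [dist_eq_norm] at hψ ⊢
        convert hψ using 2
        simp only [AddMonoidHom.add_apply, AddMonoidHom.comp_apply]
        abel
      · have hzero : QuotientAddGroup.mk' H (s u) = 0 :=
          (QuotientAddGroup.eq_zero_iff _).mpr
            (AddSubgroup.subset_closure ⟨u, hmax u hu, rfl⟩)
        rw [AddMonoidHom.add_apply, AddMonoidHom.comp_apply, hzero, map_zero, add_zero]
        exact hχ u hu
  -- `A` is the compact space of characters, as a closed subset of the product `𝕋^G`.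
  let A : Set (G → AddCircle (1 : ℝ)) := {f | ∀ a b, f (a + b) = f a + f b}
  have hA : IsClosed A := by
    simp only [A, Set.ofPred_forall]
    exact isClosed_iInter fun a => isClosed_iInter fun b =>
      isClosed_eq (by fun_prop) (by fun_prop)
  obtain ⟨f, hfA, hf⟩ := hA.isCompact.inter_iInter_nonempty
    (fun t : T => {f : G → AddCircle (1 : ℝ) | dist (f (s t)) (v t) ≤ 1 / N t})
    (fun t => isClosed_le (by fun_prop) (by fun_prop))
    (fun F => by
      obtain ⟨χ, hχ⟩ := hfin F
      exact ⟨χ, fun a b => map_add χ a b, by simpa using hχ⟩)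
  exact ⟨AddMonoidHom.mk' f hfA, by simpa using hf⟩

/-- Wideness is exactly what lets the recursion pick the next `s t` when fewer than `τ` elements have
been chosen. -/
theorem exists_transfinite_sequence {G : Type u} [AddCommGroup G] {τ : Cardinal.{u}} {S : Set G}
    (hS : IsWide τ S) {T : Type u} [LinearOrder T] [WellFoundedLT T]
    (hT : ∀ t : T, #(Set.Iio t) < τ) (N : T → ℕ) :
    ∃ s : T → G, (∀ t, s t ∈ S) ∧
      ∀ t, (N t).factorial • s t ∉ AddSubgroup.closure (s '' Set.Iio t) := by
  have step : ∀ (t : T) (ih : ∀ u, u < t → S), ∃ x : S,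
      (N t).factorial • (x : G) ∉
        AddSubgroup.closure (Set.range fun u : Set.Iio t => (ih u.1 u.2 : G)) := by
    intro t ih
    obtain ⟨_, ⟨x, hx, rfl⟩, hx'⟩ := hS (N t).factorial (Nat.factorial_pos _)
      (Set.range fun u : Set.Iio t => (ih u.1 u.2 : G))
      (by rintro _ ⟨u, rfl⟩; exact (ih u.1 u.2).2) (mk_range_le.trans_lt (hT t))
    exact ⟨⟨x, hx⟩, hx'⟩
  choose F hF using step
  let s : T → S := (wellFounded_lt (α := T)).fix F
  refine ⟨fun t => s t, fun t => (s t).2, fun t => ?_⟩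
  have h1 : s t = F t fun u _ => s u := WellFounded.fix_eq _ _ _
  have h2 := hF t fun u _ => s u
  rw [← h1] at h2
  rwa [Set.image_eq_range]

/-! ### Cardinality estimates -/

theorem clog_spec (κ : Cardinal.{u}) : ℵ₀ ≤ clog κ ∧ κ ≤ 2 ^ clog κ :=
  csInf_mem (s := {τ : Cardinal.{u} | ℵ₀ ≤ τ ∧ κ ≤ (2 : Cardinal.{u}) ^ τ})
    ⟨max κ ℵ₀, le_max_right _ _, (le_max_left _ _).trans (cantor _).le⟩

theorem aleph0_lt_clog {κ : Cardinal.{u}} (hκ : continuum < κ) : ℵ₀ < clog κ := by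
  refine (clog_spec κ).1.lt_of_ne fun h => ?_
  have h2 := (clog_spec κ).2
  rw [← h, two_power_aleph0] at h2
  exact hκ.not_ge h2

theorem clog_le_of_le_two_power {κ σ : Cardinal.{u}} (hκ : continuum < κ) (h : κ ≤ 2 ^ σ) :
    clog κ ≤ σ := by
  have h1 : clog κ ≤ max σ ℵ₀ := csInf_le' ⟨le_max_right _ _,
    h.trans (power_le_power_left two_ne_zero (le_max_left _ _))⟩
  rcases le_max_iff.mp h1 with h1 | h1
  · exact h1
  · exact absurd h1 (aleph0_lt_clog hκ).not_ge

/-- Density of `D` makes the traces on `D` of the conditions `f i ∈ U` distinct for distinct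
coordinates `i`. The set `D` is only required to lie in the range of a map from `X`. -/
theorem mk_le_two_power_of_dense {I : Type u} {D : Set (I → AddCircle (1 : ℝ))} (hD : Dense D)
    {X : Type u} (e : X → (I → AddCircle (1 : ℝ))) (he : D ⊆ Set.range e) :
    #I ≤ 2 ^ #X := by
  obtain ⟨U, V, hU, hV, h0, h1, hUV⟩ := t2_separation
    (show (0 : AddCircle (1 : ℝ)) ≠ ((1 / 2 : ℝ) : AddCircle (1 : ℝ)) by
      intro h
      obtain ⟨k, hk⟩ := AddCircle.coe_eq_zero_iff (1 : ℝ) |>.mp h.symm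
      have h2 : (2 * k : ℤ) = 1 := by
        have : (2 * k : ℝ) = 1 := by simp at hk; rw [hk]; norm_num
        exact_mod_cast this
      omega)
  rw [← mk_set]
  refine mk_le_of_injective (f := fun i : I => {x : X | e x i ∈ U}) fun i j hij => ?_
  by_contra hne
  obtain ⟨d, ⟨hdU, hdV⟩, hdD⟩ := hD.inter_open_nonempty ({f | f i ∈ U} ∩ {f | f j ∈ V})
    ((hU.preimage (continuous_apply i)).inter (hV.preimage (continuous_apply j)))
    (by
      classical
      refine ⟨Function.update (fun _ => 0) j ((1 / 2 : ℝ) : AddCircle (1 : ℝ)), ?_, ?_⟩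
      · simpa [Function.update_of_ne hne] using h0
      · simpa using h1)
  obtain ⟨x, rfl⟩ := he hdD
  have hx : x ∈ {x : X | e x j ∈ U} := by
    simp only [] at hij
    rw [← hij]; exact hdU
  exact Set.disjoint_left.mp hUV hx hdV

theorem mk_closure_lt {G : Type u} [AddCommGroup G] {τ : Cardinal.{u}} (hτ : ℵ₀ < τ)
    {S' : Set G} (h : #S' < τ) : #(AddSubgroup.closure S') < τ := by
  have hsurj : (AddSubgroup.closure S' : Set G) ⊆
      Set.range fun l : List (S' × ℤ) => (l.map fun p => p.2 • (p.1 : G)).sum := by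
    intro x hx
    induction hx using AddSubgroup.closure_induction with
    | mem x hx => exact ⟨[(⟨x, hx⟩, 1)], by simp⟩
    | zero => exact ⟨[], by simp⟩
    | add x y _ _ hx hy =>
      obtain ⟨l, rfl⟩ := hx
      obtain ⟨l', rfl⟩ := hy
      exact ⟨l ++ l', by simp⟩
    | neg x hx' hx =>
      obtain ⟨l, rfl⟩ := hx
      clear hx'
      refine ⟨l.map fun p => (p.1, -p.2), ?_⟩
      induction l with
      | nil => simp
      | cons a l ih => simp at ih ⊢; rw [ih]; abel
  refine ((mk_le_mk_of_subset hsurj).trans mk_range_le).trans_lt ((mk_list_le_max _).trans_lt ?_)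
  refine max_lt hτ ?_
  rw [mk_prod]
  simpa using mul_lt_of_lt hτ.le h hτ

/-! ### Step functions on a power set -/

/-- Finitely many distinct subsets of `X` are told apart by their traces on one finite set. -/
theorem exists_finset_separating_s6 {X I : Type u} (ι : I → Set X) (hι : Function.Injective ι)
    (F : Finset I) :
    ∃ A : Finset X, ∀ i ∈ F, ∀ j ∈ F, (ι i ∩ A : Set X) = ι j ∩ A → i = j := by
  classical
  have h : ∀ p : I × I, ∃ B : Finset X, (ι p.1 ∩ B : Set X) = ι p.2 ∩ B → p.1 = p.2 := by
    intro ⟨i, j⟩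
    by_cases hij : i = j
    · exact ⟨∅, fun _ => hij⟩
    · obtain ⟨a, ha⟩ : ∃ a, ¬ (a ∈ ι i ↔ a ∈ ι j) := by
        by_contra! hcon
        exact hij (hι (Set.ext hcon))
      refine ⟨{a}, fun heq => absurd ?_ ha⟩
      have := Set.ext_iff.mp heq a
      simpa using this
  choose B hB using h
  refine ⟨(F ×ˢ F).biUnion B, fun i hi j hj heq => hB (i, j) ?_⟩
  have hsub : (B (i, j) : Set X) ⊆ ((F ×ˢ F).biUnion B : Finset X) := by
    exact_mod_cast Finset.subset_biUnion_of_mem B (Finset.mk_mem_product hi hj)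
  have := congrArg (· ∩ (B (i, j) : Set X)) heq
  simpa only [Set.inter_assoc, Set.inter_eq_self_of_subset_right hsub] using this

/-- Data `(N, A, φ)` of a rational-valued step function on the power set of `X`, depending only on
the trace on the finite set `A`, together with a precision parameter `N`. -/
abbrev StepData (X : Type u) : Type u := ℕ × Finset X × (Finset X →₀ ℚ)

open Classical in
/-- The step function `x ↦ φ (A ∩ x) mod 1` attached to `(N, A, φ)`. -/
noncomputable def StepData.eval {X : Type u} (t : StepData X) (x : Set X) : AddCircle (1 : ℝ) :=
  ((t.2.2 (t.2.1.filter (· ∈ x)) : ℝ) : AddCircle (1 : ℝ))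

theorem mk_stepData (X : Type u) [Infinite X] : #(StepData X) = #X := by
  have hX : ℵ₀ ≤ #X := aleph0_le_mk X
  simp [StepData, hX, aleph0_mul_eq]

theorem exists_ratCast_dist_lt (w : AddCircle (1 : ℝ)) {ε : ℝ} (hε : 0 < ε) :
    ∃ q : ℚ, dist ((q : ℝ) : AddCircle (1 : ℝ)) w < ε := by
  induction w using QuotientAddGroup.induction_on with
  | H r =>
  obtain ⟨q, hq⟩ := Rat.denseRange_cast.exists_dist_lt r hε
  refine ⟨q, ?_⟩
  rw [dist_comm, Real.dist_eq] at hq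
  rw [dist_eq_norm]
  exact (QuotientAddGroup.norm_mk_le_norm (S := AddSubgroup.zmultiples (1 : ℝ))
    (m := (q : ℝ) - r)).trans_lt hq

/-- Step functions take approximately prescribed values at any finitely many distinct points of the
power set, at any precision parameter `N`. -/
theorem exists_stepData {X I : Type u} (ι : I → Set X) (hι : Function.Injective ι)
    (F : Finset I) (w : I → AddCircle (1 : ℝ)) {ε : ℝ} (hε : 0 < ε) (N : ℕ) :
    ∃ t : StepData X, t.1 = N ∧ ∀ i ∈ F, dist (t.eval (ι i)) (w i) < ε := by
  classical
  obtain ⟨A, hA⟩ := exists_finset_separating_s6 ι hι F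
  choose q hq using fun i => exists_ratCast_dist_lt (w i) hε
  have hinj : Set.InjOn (fun i => A.filter (· ∈ ι i)) F := by
    intro i hi j hj hij
    refine hA i hi j hj ?_
    ext a
    have := Finset.ext_iff.mp hij a
    simp only [Finset.mem_filter] at this
    simp only [Set.mem_inter_iff, Finset.mem_coe]
    tauto
  let φ : Finset X →₀ ℚ := ∑ i ∈ F, Finsupp.single (A.filter (· ∈ ι i)) (q i)
  refine ⟨(N, A, φ), rfl, fun i hi => ?_⟩
  have hφ : φ (A.filter (· ∈ ι i)) = q i := by
    simp only [φ, Finsupp.finsetSum_apply]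
    rw [Finset.sum_eq_single_of_mem i hi]
    · simp
    · intro j hj hji
      exact Finsupp.single_eq_of_ne fun h => hji (hinj hj hi h.symm)
  have : StepData.eval (N, A, φ) (ι i) = ((q i : ℝ) : AddCircle (1 : ℝ)) := by
    simp only [StepData.eval]
    rw [← hφ]
  rw [this]
  exact hq i

/-- The characters indexed by `I ⊆ 𝒫(X)`, where `|X| = τ`, are chosen so that the element `s t ∈ S`
is mapped close to the restriction to `I` of the step function of `t`. -/
theorem exists_dense_image_of_isWide {G : Type u} [AddCommGroup G] {τ : Cardinal.{u}}
    (hτ : ℵ₀ ≤ τ) {S : Set G} (hS : IsWide τ S) {I : Type u} (hI : #I ≤ 2 ^ τ) :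
    ∃ ϖ : G →+ (I → AddCircle (1 : ℝ)), Dense (⇑ϖ '' S) := by
  have hX : #τ.out = τ := mk_out τ
  have : Infinite τ.out := by rw [infinite_iff, hX]; exact hτ
  obtain ⟨⟨ι, hι⟩⟩ : Nonempty (I ↪ Set τ.out) := by
    rw [← Cardinal.le_def, mk_set, hX]; exact hI
  -- A well-order of type `τ` on the step functions: all proper initial segments have size `< τ`.
  obtain ⟨_, _, hord⟩ := exists_ord_eq_type_lt (StepData τ.out)
  obtain ⟨s, hsS, hs⟩ := exists_transfinite_sequence hS
    (fun t : StepData τ.out => (mk_Iio_lt t hord).trans_eq ((mk_stepData _).trans hX))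
    (fun t => t.1 + 1)
  choose χ hχ using fun i : I => exists_character_near_family s (fun t => t.1 + 1)
    (fun t => Nat.le_add_left 1 _) hs (fun t => t.eval (ι i))
  refine ⟨AddMonoidHom.pi χ, ?_⟩
  intro w
  rw [mem_closure_iff_nhds]
  intro O hO
  rw [nhds_pi, Filter.mem_pi'] at hO
  obtain ⟨F, B, hB, hBO⟩ := hO
  choose ε hε hεB using fun i => Metric.mem_nhds_iff.mp (hB i)
  obtain ⟨δ, hδ, hδε⟩ : ∃ δ > 0, ∀ i ∈ F, δ ≤ ε i := by
    rcases F.eq_empty_or_nonempty with rfl | hF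
    · exact ⟨1, one_pos, by simp⟩
    · exact ⟨F.inf' hF ε, (Finset.lt_inf'_iff hF).mpr fun i _ => hε i,
        fun i hi => Finset.inf'_le ε hi⟩
  obtain ⟨N, hN⟩ := exists_nat_one_div_lt (half_pos hδ)
  obtain ⟨t, htN, ht⟩ := exists_stepData ι hι F w (half_pos hδ) N
  refine ⟨_, hBO fun i hi => hεB i ?_, s t, hsS t, rfl⟩
  have h1 := hχ i t
  have h2 := ht i hi
  have h3 := hδε i hi
  rw [htN] at h1
  push_cast at h1
  have h4 := dist_triangle (χ i (s t)) (t.eval (ι i)) (w i)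
  rw [Metric.mem_ball, AddMonoidHom.pi_apply]
  linarith

/-- Let `κ > 𝔠` and `τ = log κ`. For a subset `S` of an abelian group `G`,
the following are equivalent: (i) there is a group homomorphism `ϖ : G → 𝕋^κ` with `ϖ(S)`
dense in `𝕋^κ`; (ii) `τ ≤ |nS|` for every integer `n ≥ 1`; (iii) `S` is `τ`-wide. -/
theorem stmt6 {G : Type u} [AddCommGroup G] (κ : Cardinal.{u})
    (hκ : Cardinal.continuum < κ) (S : Set G) :
    List.TFAE [
      ∃ ϖ : G →+ (κ.out → AddCircle (1 : ℝ)), Dense (⇑ϖ '' S),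
      ∀ n : ℕ, 1 ≤ n → clog κ ≤ #((fun s => n • s) '' S),
      IsWide (clog κ) S ] := by
  tfae_have 1 → 2 := by
    rintro ⟨ϖ, hϖ⟩ n hn
    have hsurj : Function.Surjective fun f : κ.out → AddCircle (1 : ℝ) => n • f := by
      intro f
      refine ⟨fun i => DivisibleBy.div (f i) (n : ℤ), funext fun i => ?_⟩
      have := DivisibleBy.div_cancel (f i) (show (n : ℤ) ≠ 0 by omega)
      simpa using this
    have hdense := hsurj.denseRange.dense_image (by fun_prop) hϖ
    refine clog_le_of_le_two_power hκ ?_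
    rw [← mk_out κ]
    refine mk_le_two_power_of_dense hdense (fun x => ϖ x.1) ?_
    rintro _ ⟨_, ⟨x, hx, rfl⟩, rfl⟩
    exact ⟨⟨n • x, x, hx, rfl⟩, map_nsmul ϖ n x⟩
  tfae_have 2 → 3 := by
    intro h n hn S' hS' hcard
    rw [Set.nonempty_iff_ne_empty, Ne, Set.sdiff_eq_empty]
    intro hsub
    exact ((h n hn).trans (mk_le_mk_of_subset hsub)).not_gt
      (mk_closure_lt (aleph0_lt_clog hκ) hcard)
  tfae_have 3 → 2 := by
    intro h n hn
    by_contra! hlt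
    -- A transversal `S'` of `s ↦ n • s` on `S` has size `|nS|` and generates a group containing `nS`.
    obtain ⟨S', hS', hbij⟩ := Set.SurjOn.exists_bijOn_subset
      (Set.surjOn_image (fun s : G => n • s) S)
    have hcard : #S' < clog κ := by
      rw [← hbij.image_eq, mk_image_eq_of_injOn _ _ hbij.injOn] at hlt
      exact hlt
    obtain ⟨y, hy, hyn⟩ := h n hn S' hS' hcard
    rw [← hbij.image_eq] at hy
    obtain ⟨x, hx, rfl⟩ := hy
    exact hyn (AddSubgroup.nsmul_mem _ (AddSubgroup.subset_closure hx) n)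
  tfae_have 3 → 1 := fun h => exists_dense_image_of_isWide (clog_spec κ).1 h
    ((mk_out κ).le.trans (clog_spec κ).2)
  tfae_finish
end

section
/- Let V be an open arc in the circle group 𝕋 = ℝ/ℤ, let z, z' ∈ 𝕋, and let m, n be positive integers with 1 ≤ n < m and 2/m < l(V), where l(V) is the length of V. Then there exists y ∈ V such that m·y = z and n·y ≠ z'. -/
/-!
The solutions of `m • y = z` are spaced `1 / m` apart, so an arc longer than `2 / m` contains two
consecutive ones. If both satisfied `n • y = z'`, their difference `1 / m` would be killed by `n`
in `ℝ/ℤ`, so `m` would divide `n`, contradicting `1 ≤ n < m`.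
-/

theorem coe_eq_iff (x y : ℝ) :
    (x : AddCircle (1 : ℝ)) = (y : AddCircle (1 : ℝ)) ↔ ∃ j : ℤ, j • (1 : ℝ) = x - y := by
  rw [← sub_eq_zero, ← AddCircle.coe_sub, AddCircle.coe_eq_zero_iff]

/-- Let `V` be an open arc in `𝕋 = ℝ/ℤ` (the image of an open interval
`(a, b)` of length `b - a < 1` under the quotient map), let `z, z' ∈ 𝕋`, and let `m, n`
be integers with `1 ≤ n < m` and `2/m < l(V) = b - a`. Then there exists `y ∈ V` with
`m • y = z` and `n • y ≠ z'`. -/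
theorem stmt17 (a b : ℝ) (hab : a < b) (hlen : b - a < 1)
    (z z' : AddCircle (1 : ℝ)) (m n : ℕ) (hn : 1 ≤ n) (hnm : n < m)
    (harc : 2 / (m : ℝ) < b - a) :
    ∃ y ∈ (fun x : ℝ => (x : AddCircle (1 : ℝ))) '' Set.Ioo a b,
      m • y = z ∧ n • y ≠ z' := by
  obtain ⟨t, rfl⟩ := QuotientAddGroup.mk_surjective z
  have hm : (0 : ℝ) < m := by exact_mod_cast (by omega : 0 < m)
  have hroot : ∀ k : ℤ, m • (((t + k) / m : ℝ) : AddCircle (1 : ℝ)) = (t : AddCircle (1 : ℝ)) := by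
    intro k
    rw [← AddCircle.coe_nsmul]
    refine (coe_eq_iff _ _).2 ⟨k, ?_⟩
    simp only [nsmul_eq_mul, zsmul_eq_mul]
    field_simp
    ring
  -- `(t + k) / m` is the first solution of `m • y = z` to the right of `a`.
  set k : ℤ := ⌊m * a - t⌋ + 1 with hk
  have hk₁ : m * a < t + k := by
    have := Int.lt_floor_add_one (m * a - t)
    push_cast [hk]
    linarith
  have hk₂ : t + k + 1 < m * b := by
    have := Int.floor_le (m * a - t)
    rw [div_lt_iff₀ hm] at harc
    push_cast [hk]
    linarith
  by_contra! hall
  have h₁ := hall _ ⟨(t + k) / m, ⟨by rw [lt_div_iff₀ hm]; linarith,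
    by rw [div_lt_iff₀ hm]; linarith⟩, rfl⟩ (hroot k)
  have h₂ := hall _ ⟨(t + (k + 1 : ℤ)) / m, ⟨by rw [lt_div_iff₀ hm]; push_cast; linarith,
    by rw [div_lt_iff₀ hm]; push_cast; linarith⟩, rfl⟩ (hroot (k + 1))
  -- The two solutions differ by `1 / m`, so equal `n`-fold multiples make `n / m` an integer.
  have h := h₂.trans h₁.symm
  simp only [← AddCircle.coe_nsmul] at h
  obtain ⟨j, hj⟩ := (coe_eq_iff _ _).1 h
  have hj' : (n : ℝ) = j * m := by
    simp only [nsmul_eq_mul, zsmul_eq_mul] at hj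
    push_cast at hj
    field_simp at hj
    linarith
  have hdvd : (m : ℤ) ∣ n := ⟨j, by rw [mul_comm]; exact_mod_cast hj'⟩
  exact absurd (Nat.le_of_dvd hn (Int.natCast_dvd_natCast.1 hdvd)) (by omega)
end

section
/- Let τ ≤ κ be infinite cardinals and let K be a subgroup of 𝕋^κ with |K| ≤ τ. For each γ < κ let V_γ be an open arc in 𝕋 such that {l(V_γ) : γ < κ} has a positive lower bound. Then there exists f ∈ ∏_{γ<κ} V_γ such that f has infinite order (the subgroup ⟨f⟩ is isomorphic to ℤ) and ⟨f⟩ ∩ K = {0}. -/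
/-!
The proof is a diagonalization. It suffices that `(n + 1) • f ∉ K` for every `n : ℕ`; since `0 ∈ K`,
this also gives infinite order. As `#(K × ℕ) ≤ κ`, the pairs `(k, n)` inject into the coordinates,
and the coordinate `γ` assigned to `(k, n)` is used to guarantee `(n + 1) • f γ ≠ k γ`. This is
possible inside any arc, since multiplication by `n + 1` is not constant on it
(`exists_nsmul_ne`).
-/

open Cardinal

/-- Multiplication by a positive integer is not constant on an arc. -/
lemma exists_nsmul_ne (a b : ℝ) (hab : a < b) (hlen : b - a < 1) (n : ℕ)
    (c : AddCircle (1 : ℝ)) :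
    ∃ x ∈ Set.Ioo a b, (n + 1) • (x : AddCircle (1 : ℝ)) ≠ c := by
  by_contra! h
  -- Two points at distance `δ` with `0 < (n + 1) * δ < 1` have different images.
  obtain ⟨δ, hδ⟩ : ∃ δ : ℝ, δ = (b - a) / (2 * (n + 2)) := ⟨_, rfl⟩
  have hn : (0 : ℝ) ≤ n := n.cast_nonneg
  have hmul : δ * (2 * (n + 2)) = b - a := by
    rw [hδ]
    field_simp
  have hpos : 0 < δ := by
    rw [hδ]
    exact div_pos (by linarith) (by linarith)
  have hnδ : 0 ≤ n * δ := by positivity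
  have h1 := h ((a + b) / 2) ⟨by linarith, by linarith⟩
  have h2 := h ((a + b) / 2 + δ) ⟨by linarith, by nlinarith⟩
  rw [AddCircle.coe_add, smul_add, h1] at h2
  have h3 : (((n + 1) • δ : ℝ) : AddCircle (1 : ℝ)) = 0 := by
    rw [AddCircle.coe_nsmul]
    exact add_eq_left.mp h2
  obtain ⟨m, hm⟩ := (AddCircle.coe_eq_zero_iff (1 : ℝ)).mp h3
  simp only [zsmul_eq_mul, mul_one, nsmul_eq_mul, Nat.cast_add, Nat.cast_one] at hm
  have hm0 : (0 : ℝ) < m := by nlinarith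
  have hm1 : (m : ℝ) < 1 := by nlinarith
  have hm0' : 0 < m := by exact_mod_cast hm0
  have hm1' : m < 1 := by exact_mod_cast hm1
  omega

/-- Let `τ ≤ κ` be infinite cardinals and `K` a subgroup of `𝕋^κ` with
`|K| ≤ τ`. For each `γ < κ` let `V_γ` be an open arc in `𝕋` (the image of the open
interval `(a γ, b γ)` with `b γ - a γ < 1` under the quotient map `ℝ → ℝ/ℤ`), such that
the lengths `{l(V_γ) : γ < κ}` have a positive lower bound. Then there is
`f ∈ ∏_{γ<κ} V_γ` of infinite order (so `⟨f⟩ ≅ ℤ`) with `⟨f⟩ ∩ K = {0}`. -/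
theorem stmt18 (τ κ : Cardinal.{0}) (hτ : ℵ₀ ≤ τ) (hτκ : τ ≤ κ)
    (K : AddSubgroup (κ.out → AddCircle (1 : ℝ))) (hK : #K ≤ τ)
    (a b : κ.out → ℝ) (hab : ∀ γ, a γ < b γ) (hlen : ∀ γ, b γ - a γ < 1)
    (hlb : ∃ ε : ℝ, 0 < ε ∧ ∀ γ, ε ≤ b γ - a γ) :
    ∃ f : κ.out → AddCircle (1 : ℝ),
      (∀ γ, f γ ∈ (fun x : ℝ => (x : AddCircle (1 : ℝ))) '' Set.Ioo (a γ) (b γ)) ∧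
      (∀ n : ℕ, 1 ≤ n → n • f ≠ 0) ∧
      AddSubgroup.zmultiples f ⊓ K = ⊥ := by
  have hcard : #(K × ℕ) ≤ #κ.out := by
    rw [Cardinal.mk_prod, Cardinal.mk_out]
    simp only [Cardinal.lift_id, Cardinal.mk_nat]
    exact (Cardinal.mul_le_max_of_aleph0_le_right le_rfl).trans
      (max_le (hK.trans hτκ) (hτ.trans hτκ))
  obtain ⟨e⟩ := hcard
  have key : ∀ γ, ∃ x ∈ Set.Ioo (a γ) (b γ),
      ∀ p, e p = γ → (p.2 + 1) • (x : AddCircle (1 : ℝ)) ≠ p.1.1 γ := by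
    intro γ
    by_cases hγ : ∃ p, e p = γ
    · obtain ⟨p, hp⟩ := hγ
      obtain ⟨x, hx, hne⟩ := exists_nsmul_ne (a γ) (b γ) (hab γ) (hlen γ) p.2 (p.1.1 γ)
      refine ⟨x, hx, fun q hq => ?_⟩
      rwa [e.injective (hq.trans hp.symm)]
    · exact ⟨(a γ + b γ) / 2, ⟨by linarith [hab γ], by linarith [hab γ]⟩,
        fun p hp => absurd ⟨p, hp⟩ hγ⟩
  choose x hx hne using key
  have main : ∀ n : ℕ, 1 ≤ n → n • (fun γ => (x γ : AddCircle (1 : ℝ))) ∉ K := by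
    intro n hn hmem
    obtain ⟨m, rfl⟩ := Nat.exists_eq_add_of_le' hn
    exact hne (e (⟨_, hmem⟩, m)) (⟨_, hmem⟩, m) rfl rfl
  refine ⟨fun γ => (x γ : AddCircle (1 : ℝ)), fun γ => ⟨x γ, hx γ, rfl⟩,
    fun n hn h0 => main n hn (h0 ▸ K.zero_mem), ?_⟩
  rw [eq_bot_iff]
  rintro g ⟨hg, hgK⟩
  obtain ⟨z, rfl⟩ := AddSubgroup.mem_zmultiples_iff.mp hg
  by_cases hz : z = 0
  · simp [hz]
  · refine absurd ?_ (main z.natAbs (Nat.one_le_iff_ne_zero.mpr (Int.natAbs_ne_zero.mpr hz)))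
    rcases Int.natAbs_eq z with h | h
    · rw [h, natCast_zsmul] at hgK
      exact hgK
    · rw [h, neg_smul, natCast_zsmul] at hgK
      exact neg_mem_iff.mp hgK
end

section
/- Let τ ≤ κ be infinite cardinals, let K be a subgroup of 𝕋^κ with |K| ≤ τ, let f' ∈ K, and let m ≥ 2 be an integer. For each γ < κ let V_γ be an open arc in 𝕋 with 2/m < l(V_γ). Then there exists f ∈ ∏_{γ<κ} V_γ such that m·f = f' and n·f ∉ K for every integer n with 1 ≤ n < m. -/
/-!
A real interval of length greater than `2/m` contains two consecutive solutions `x`, `x + 1/m` of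
`m • x = c` in the circle. For `1 ≤ n < m` the points `n • x` and `n • (x + 1/m)` differ by
`n/m ≠ 0`, so at least one of them avoids any prescribed value (`exists_root_avoiding`).
Since `K × ℕ` has at most `κ` elements, it can be enumerated by the coordinates `γ < κ`; choosing
`f γ` so that `n • f γ ≠ k γ` at the coordinate `γ` that codes `(k, n)` makes `n • f` different from
every `k ∈ K`.
-/

open Cardinal

/-- In an arc of length greater than `2/m`, some `x` with `m • x = c` has its `n`-th multiple
avoid a given value `d`, provided `1 ≤ n < m`. -/
lemma exists_root_avoiding (m : ℕ) (hm : 2 ≤ m) (a b : ℝ) (harc : 2 / (m : ℝ) < b - a)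
    (c d : AddCircle (1 : ℝ)) (n : ℕ) :
    ∃ x : AddCircle (1 : ℝ), x ∈ (fun x : ℝ => (x : AddCircle (1 : ℝ))) '' Set.Ioo a b ∧
      m • x = c ∧ (1 ≤ n → n < m → n • x ≠ d) := by
  obtain ⟨c, rfl⟩ := QuotientAddGroup.mk_surjective c
  have hm0 : (0 : ℝ) < m := by exact_mod_cast (by omega : 0 < m)
  -- The real solutions are `(c + j) / m`; take the first one to the right of `a`.
  obtain ⟨j, hj⟩ : ∃ j : ℤ, j = ⌊m * a - c⌋ + 1 := ⟨_, rfl⟩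
  have hj1 : m * a - c < j := by rw [hj]; push_cast; exact Int.lt_floor_add_one _
  have hj2 : (j : ℝ) ≤ m * a - c + 1 := by
    rw [hj]; push_cast; linarith [Int.floor_le (m * a - c)]
  have harc' : 2 < (b - a) * m := (div_lt_iff₀ hm0).1 harc
  have key : ∀ i : ℤ, j ≤ i → i ≤ j + 1 →
      (((c + i) / m : ℝ) : AddCircle (1 : ℝ)) ∈
        (fun x : ℝ => (x : AddCircle (1 : ℝ))) '' Set.Ioo a b ∧
      m • (((c + i) / m : ℝ) : AddCircle (1 : ℝ)) = (c : AddCircle (1 : ℝ)) := by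
    intro i h1 h2
    have h1' : (j : ℝ) ≤ i := by exact_mod_cast h1
    have h2' : (i : ℝ) ≤ j + 1 := by exact_mod_cast h2
    refine ⟨⟨_, ⟨?_, ?_⟩, rfl⟩, ?_⟩
    · rw [lt_div_iff₀ hm0]; linarith
    · rw [div_lt_iff₀ hm0]; linarith
    · rw [← AddCircle.coe_nsmul, nsmul_eq_mul, mul_div_cancel₀ _ hm0.ne', AddCircle.coe_add]
      have : ((i : ℝ) : AddCircle (1 : ℝ)) = 0 :=
        (AddCircle.coe_eq_zero_iff 1).2 ⟨i, by simp⟩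
      rw [this, add_zero]
  by_cases h : 1 ≤ n ∧ n < m ∧ n • (((c + j) / m : ℝ) : AddCircle (1 : ℝ)) = d
  · obtain ⟨hn1, hnm, hd⟩ := h
    obtain ⟨k1, k2⟩ := key (j + 1) (by omega) le_rfl
    refine ⟨_, k1, k2, fun _ _ he => ?_⟩
    rw [← hd, ← sub_eq_zero, ← AddCircle.coe_nsmul, ← AddCircle.coe_nsmul, ← AddCircle.coe_sub,
      AddCircle.coe_eq_zero_iff] at he
    obtain ⟨z, hz⟩ := he
    have hz' : (z : ℝ) * m = n := by
      have e : (z : ℝ) = n / m := by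
        rw [zsmul_eq_mul, mul_one] at hz
        rw [hz]; push_cast; simp only [nsmul_eq_mul]; ring
      rw [e, div_mul_cancel₀ _ hm0.ne']
    have hz2 : z * (m : ℤ) = n := by exact_mod_cast hz'
    have hdvd : m ∣ n := by
      have : (m : ℤ) ∣ n := ⟨z, by rw [← hz2, mul_comm]⟩
      exact_mod_cast this
    exact absurd (Nat.le_of_dvd hn1 hdvd) (by omega)
  · obtain ⟨k1, k2⟩ := key j le_rfl (by omega)
    exact ⟨_, k1, k2, fun h1 h2 h3 => h ⟨h1, h2, h3⟩⟩

/-- Let `τ ≤ κ` be infinite cardinals, `K` a subgroup of `𝕋^κ` with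
`|K| ≤ τ`, `f' ∈ K`, and `m ≥ 2` an integer. For each `γ < κ` let `V_γ` be an open arc
in `𝕋` (the image of the open interval `(a γ, b γ)` with `b γ - a γ < 1` under the
quotient map `ℝ → ℝ/ℤ`) with `2/m < l(V_γ) = b γ - a γ`. Then there exists
`f ∈ ∏_{γ<κ} V_γ` such that `m • f = f'` and `n • f ∉ K` for every integer
`1 ≤ n < m`. -/
theorem stmt19 (τ κ : Cardinal.{0}) (hτ : ℵ₀ ≤ τ) (hτκ : τ ≤ κ)
    (K : AddSubgroup (κ.out → AddCircle (1 : ℝ))) (hK : #K ≤ τ)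
    (f' : κ.out → AddCircle (1 : ℝ)) (hf' : f' ∈ K)
    (m : ℕ) (hm : 2 ≤ m)
    (a b : κ.out → ℝ) (hab : ∀ γ, a γ < b γ) (hlen : ∀ γ, b γ - a γ < 1)
    (harc : ∀ γ, 2 / (m : ℝ) < b γ - a γ) :
    ∃ f : κ.out → AddCircle (1 : ℝ),
      (∀ γ, f γ ∈ (fun x : ℝ => (x : AddCircle (1 : ℝ))) '' Set.Ioo (a γ) (b γ)) ∧
      m • f = f' ∧
      ∀ n : ℕ, 1 ≤ n → n < m → n • f ∉ K := by
  have hcard : #(K × ℕ) ≤ #κ.out := by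
    rw [mk_out, mk_prod, lift_id, lift_id, mk_nat]
    exact (mul_le_of_le hτ hK hτ).trans hτκ
  obtain ⟨e⟩ := Cardinal.le_def _ _ |>.1 hcard
  have : Nonempty (K × ℕ) := ⟨(0, 0)⟩
  obtain ⟨p, hp⟩ : ∃ p : κ.out → K × ℕ, Function.Surjective p :=
    ⟨Function.invFun e, Function.invFun_surjective e.injective⟩
  choose f h1 h2 h3 using fun γ =>
    exists_root_avoiding m hm (a γ) (b γ) (harc γ) (f' γ) ((p γ).1.1 γ) (p γ).2
  refine ⟨f, h1, funext h2, fun n hn hnm hmem => ?_⟩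
  obtain ⟨γ, hγ⟩ := hp (⟨n • f, hmem⟩, n)
  have := h3 γ
  rw [hγ] at this
  exact this hn hnm rfl
end
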